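/- arXiv:2102.02280 — 3 statements merged into one kernel-verified Lean document; each statement's English description precedes it below -/
import Mathlib

section
/- Let t > 0, let (a_p) be positive real numbers and (θ_p) real numbers in [0,2π) indexed by the primes, and let X_t(τ) = ∑_{p ≤ t, p prime} a_p e^{i(τ log p + θ_p)}. Then for every real λ, lim_{T→∞} (1/T) ∫_T^{2T} exp(i λ Im X_t(τ)) dτ = ∏_{p ≤ t, p prime} ( (1/(2π)) ∫_0^{2π} exp(i a_p λ sin φ) dφ ); that is, the characteristic function of Im X_t factorizes as the product of the characteristic functions of its individual summands, so the summands are statistically independent. -/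
open MeasureTheory Filter Real

/-- The set of primes `p ≤ t`. -/
noncomputable def primesUpTo (t : ℝ) : Finset ℕ :=
  (Finset.range (⌊t⌋₊ + 1)).filter Nat.Prime

/-- The finite prime Dirichlet series `X_t(τ) = ∑_{p ≤ t} a_p e^{i(τ log p + θ_p)}`. -/
noncomputable def primeDirichletX (t : ℝ) (a θ : ℕ → ℝ) (τ : ℝ) : ℂ :=
  ∑ p ∈ primesUpTo t, (a p : ℂ) * Complex.exp (Complex.I * ((τ * Real.log p + θ p : ℝ) : ℂ))

/-- `J₀(x) = (1/(2π)) ∫_0^{2π} e^{i x sin φ} dφ`, the characteristic function of a single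
summand `a_p sin(τ log p + θ_p)` at `λ = 1` scaling, i.e. the zeroth Bessel function. -/
noncomputable def besselJ0 (x : ℝ) : ℂ :=
  (1 / (2 * (π : ℂ))) * ∫ φ in (0:ℝ)..(2 * π), Complex.exp (Complex.I * ((x * Real.sin φ : ℝ) : ℂ))

/-!
The angles `τ log p + θ_p` run along a line on a finite-dimensional torus. Unique factorization
makes the numbers `log p` linearly independent over `ℤ`, so every nontrivial character of the torus
restricts to an oscillation `τ ↦ C e^{iωτ}` with `ω ≠ 0`, whose average over a long interval tends
to `0`, the Haar integral of the character. Characters span a dense subspace of the continuous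
functions, hence averages of any continuous function along the line tend to its Haar integral
(Kronecker–Weyl). Now `exp (i λ Im X_t)` is a product of functions of the separate angles, and its
Haar integral splits by Fubini into the Bessel factors.
-/

lemma log_prod_pow_of_primes {f : ℕ →₀ ℕ} (hf : ∀ p ∈ f.support, p.Prime) :
    Real.log (f.prod (· ^ ·) : ℕ) = f.sum fun p k => k * Real.log p := by
  rw [Real.log_nat_eq_sum_factorization, Nat.prod_pow_factorization_eq_self hf]

lemma eq_of_sum_mul_log_eq {f g : ℕ →₀ ℕ} (hf : ∀ p ∈ f.support, p.Prime)
    (hg : ∀ p ∈ g.support, p.Prime)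
    (h : (f.sum fun p k => k * Real.log p) = g.sum fun p k => k * Real.log p) : f = g := by
  have prod_pos {f : ℕ →₀ ℕ} (hf : ∀ p ∈ f.support, p.Prime) : 0 < f.prod (· ^ ·) :=
    Finset.prod_pos fun p hp => pow_pos (hf p hp).pos _
  rw [← log_prod_pow_of_primes hf, ← log_prod_pow_of_primes hg] at h
  have hprod : f.prod (· ^ ·) = g.prod (· ^ ·) := by
    exact_mod_cast Real.log_injOn_pos (Set.mem_Ioi.2 <| Nat.cast_pos.2 <| prod_pos hf)
      (Set.mem_Ioi.2 <| Nat.cast_pos.2 <| prod_pos hg) h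
  rw [← Nat.prod_pow_factorization_eq_self hf, hprod, Nat.prod_pow_factorization_eq_self hg]

lemma linearIndepOn_log_primes :
    LinearIndepOn ℤ (fun p : ℕ => Real.log p) {p | p.Prime} := by
  rw [linearIndepOn_iff]
  intro n hn hsum
  -- Moving the negative coefficients to the other side turns the relation into an equality of
  -- logarithms of two natural numbers.
  let pos : ℕ →₀ ℕ := n.mapRange Int.toNat rfl
  let neg : ℕ →₀ ℕ := (-n).mapRange Int.toNat rfl
  have hpos : pos.support ⊆ n.support := Finsupp.support_mapRange
  have hneg : neg.support ⊆ n.support := Finsupp.support_mapRange.trans (Finsupp.support_neg n).le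
  have hlog : (pos.sum fun p k => k * Real.log p) = neg.sum fun p k => k * Real.log p := by
    rw [Finsupp.sum_of_support_subset _ hpos _ (by simp),
      Finsupp.sum_of_support_subset _ hneg _ (by simp), ← sub_eq_zero, ← Finset.sum_sub_distrib,
      ← hsum, Finsupp.linearCombination_apply, Finsupp.sum]
    refine Finset.sum_congr rfl fun p _ => ?_
    have hcast : ((n p).toNat : ℝ) - ((-n p).toNat : ℝ) = n p := by
      exact_mod_cast Int.toNat_sub_toNat_neg (n p)
    simp only [pos, neg, Finsupp.mapRange_apply, Finsupp.neg_apply, ← sub_mul, hcast, zsmul_eq_mul]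
  have heq : pos = neg :=
    eq_of_sum_mul_log_eq (fun p hp => hn (hpos hp)) (fun p hp => hn (hneg hp)) hlog
  ext p
  have hp : (n p).toNat = (-n p).toNat := DFunLike.congr_fun heq p
  simp only [Finsupp.coe_zero, Pi.zero_apply]
  omega

lemma linearIndepOn_log_primesUpTo (t : ℝ) :
    LinearIndepOn ℤ (fun p : ℕ => Real.log p) (primesUpTo t : Set ℕ) :=
  linearIndepOn_log_primes.mono fun _ hp => (Finset.mem_filter.1 hp).2

section DenseSpan

variable {X 𝕜 κ : Type*} [TopologicalSpace X] [CompactSpace X] [MeasurableSpace X]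
  [OpensMeasurableSpace X] [RCLike 𝕜]

lemma integrable_continuousMap_of_compactSpace (μ : Measure X) [IsFiniteMeasure μ] (f : C(X, 𝕜)) :
    Integrable f μ :=
  f.continuous.integrable_of_hasCompactSupport (HasCompactSupport.of_compactSpace _)

lemma lipschitzWith_integral_continuousMap (μ : Measure X) [IsZeroOrProbabilityMeasure μ] :
    LipschitzWith 1 fun f : C(X, 𝕜) => ∫ x, f x ∂μ := by
  refine LipschitzWith.mk_one fun f g => ?_
  rw [dist_eq_norm, ← integral_sub (integrable_continuousMap_of_compactSpace μ f)
    (integrable_continuousMap_of_compactSpace μ g)]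
  calc ‖∫ x, f x - g x ∂μ‖ ≤ dist f g * μ.real Set.univ :=
        norm_integral_le_of_norm_le_const <| .of_forall fun x => by
          simpa only [dist_eq_norm] using ContinuousMap.dist_apply_le_dist (f := f) (g := g) x
    _ ≤ dist f g := mul_le_of_le_one_right dist_nonneg measureReal_le_one

theorem tendsto_integral_of_topologicalClosure_span_eq_top {S : Set C(X, 𝕜)}
    (hS : (Submodule.span 𝕜 S).topologicalClosure = ⊤) {l : Filter κ} {μ : κ → Measure X}
    [∀ k, IsZeroOrProbabilityMeasure (μ k)] {ν : Measure X} [IsZeroOrProbabilityMeasure ν]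
    (h : ∀ g ∈ S, Tendsto (fun k => ∫ x, g x ∂μ k) l (nhds (∫ x, g x ∂ν))) (f : C(X, 𝕜)) :
    Tendsto (fun k => ∫ x, f x ∂μ k) l (nhds (∫ x, f x ∂ν)) := by
  have hspan : ∀ g ∈ Submodule.span 𝕜 S,
      Tendsto (fun k => ∫ x, g x ∂μ k) l (nhds (∫ x, g x ∂ν)) := by
    intro g hg
    induction hg using Submodule.span_induction with
    | mem g hg => exact h g hg
    | zero => simpa using tendsto_const_nhds
    | add f g _ _ hf hg =>
      simpa only [ContinuousMap.add_apply, integral_add, integrable_continuousMap_of_compactSpace]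
        using hf.add hg
    | smul c g _ hg =>
      simpa only [ContinuousMap.smul_apply, integral_smul] using hg.const_smul c
  have hequi : Equicontinuous fun k (f : C(X, 𝕜)) => ∫ x, f x ∂μ k :=
    (LipschitzWith.uniformEquicontinuous _ 1 fun k =>
      lipschitzWith_integral_continuousMap (μ k)).equicontinuous
  have hclosed := hequi.isClosed_setOfPred_tendsto (l := l)
    (lipschitzWith_integral_continuousMap ν).continuous
  have hf : f ∈ closure (Submodule.span 𝕜 S : Set C(X, 𝕜)) := by
    rw [← Submodule.topologicalClosure_coe, hS]
    trivial
  exact closure_minimal hspan hclosed hf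

end DenseSpan

lemma interval_average_eq_integral_cond {E : Type*} [NormedAddCommGroup E] [NormedSpace ℝ E]
    (f : ℝ → E) (u v : ℝ) :
    ⨍ τ in u..v, f τ = ∫ τ, f τ ∂(ProbabilityTheory.cond volume (Set.uIoc u v)) := by
  rw [average, Measure.restrict_apply_univ, ProbabilityTheory.cond]

lemma interval_average_two_mul (f : ℝ → ℂ) (T : ℝ) :
    ⨍ τ in T..(2 * T), f τ = (1 / T) * ∫ τ in T..(2 * T), f τ := by
  rw [interval_average_eq, two_mul, add_sub_cancel_right, Complex.real_smul, Complex.ofReal_inv,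
    one_div]

lemma tendsto_two_mul_sub_self_atTop : Tendsto (fun T : ℝ => 2 * T - T) atTop atTop :=
  tendsto_id.congr fun T => by rw [id, two_mul, add_sub_cancel_right]

section LongIntervals

variable {κ : Type*} {l : Filter κ} {u v : κ → ℝ}

lemma tendsto_interval_average_const {E : Type*} [NormedAddCommGroup E] [NormedSpace ℝ E]
    [CompleteSpace E] (huv : Tendsto (fun k => v k - u k) l atTop) (c : E) :
    Tendsto (fun k => ⨍ _τ in u k..v k, c) l (nhds c) := by
  refine tendsto_const_nhds.congr' ?_
  filter_upwards [huv.eventually_gt_atTop 0] with k hk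
  rw [interval_average_eq, intervalIntegral.integral_const, inv_smul_smul₀ hk.ne']

lemma norm_interval_average_exp_le {ω : ℝ} (hω : ω ≠ 0) (u v : ℝ) :
    ‖⨍ τ in u..v, Complex.exp (Complex.I * ω * τ)‖ ≤ 2 / |ω| * |v - u|⁻¹ := by
  have hc : Complex.I * (ω : ℂ) ≠ 0 := mul_ne_zero Complex.I_ne_zero (Complex.ofReal_ne_zero.2 hω)
  have norm_exp (x : ℝ) : ‖Complex.exp (Complex.I * ω * x)‖ = 1 := by
    rw [mul_assoc, ← Complex.ofReal_mul, Complex.norm_exp_I_mul_ofReal]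
  have hnum : ‖Complex.exp (Complex.I * ω * v) - Complex.exp (Complex.I * ω * u)‖ ≤ 2 := by
    refine (norm_sub_le _ _).trans_eq ?_
    rw [norm_exp, norm_exp, one_add_one_eq_two]
  rw [interval_average_eq, integral_exp_mul_complex hc, norm_smul, norm_div, norm_mul,
    Complex.norm_I, one_mul, Complex.norm_real, norm_inv, Real.norm_eq_abs, Real.norm_eq_abs,
    mul_comm]
  gcongr

lemma tendsto_interval_average_exp (huv : Tendsto (fun k => v k - u k) l atTop) {ω : ℝ}
    (hω : ω ≠ 0) :
    Tendsto (fun k => ⨍ τ in u k..v k, Complex.exp (Complex.I * ω * τ)) l (nhds 0) := by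
  refine squeeze_zero_norm (fun k => norm_interval_average_exp_le hω (u k) (v k)) ?_
  simpa using (tendsto_abs_atTop_atTop.comp huv).inv_tendsto_atTop.const_mul (2 / |ω|)

end LongIntervals

section KroneckerWeyl

variable {ι : Type*}

/-- The line `τ ↦ (τ ω i + θ i)_i` on the torus of angles, wound around the unit torus `(ℝ / ℤ)^ι`;
angles are divided by `2π` because Mathlib's Fourier monomials live on that torus. -/
noncomputable def torusLine (ω θ : ι → ℝ) (τ : ℝ) : UnitAddTorus ι :=
  fun i => ((τ * ω i + θ i) / (2 * π) : ℝ)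

lemma continuous_torusLine (ω θ : ι → ℝ) : Continuous (torusLine ω θ) :=
  continuous_pi fun i => (AddCircle.continuous_mk' 1).comp (by fun_prop)

lemma fourier_torusLine (n : ℤ) (ω θ : ι → ℝ) (τ : ℝ) (i : ι) :
    fourier n (torusLine ω θ τ i) =
      Complex.exp (Complex.I * (n * (τ * ω i + θ i) : ℝ)) := by
  have hπ : (π : ℂ) ≠ 0 := Complex.ofReal_ne_zero.2 Real.pi_ne_zero
  rw [torusLine, fourier_coe_apply]
  congr 1
  push_cast
  field_simp

lemma integral_fourier_eq_zero {T : ℝ} [hT : Fact (0 < T)] {n : ℤ} (hn : n ≠ 0) :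
    ∫ x : AddCircle T, fourier n x = 0 :=
  integral_eq_zero_of_add_right_eq_neg (fourier_add_half_inv_index hn hT.out)

variable [Fintype ι]

lemma mFourier_torusLine (n : ι → ℤ) (ω θ : ι → ℝ) (τ : ℝ) :
    UnitAddTorus.mFourier n (torusLine ω θ τ) =
      Complex.exp (Complex.I * (∑ i, n i * θ i : ℝ)) *
        Complex.exp (Complex.I * (∑ i, n i * ω i : ℝ) * τ) := by
  simp only [UnitAddTorus.mFourier, ContinuousMap.coe_mk, fourier_torusLine]
  rw [← Complex.exp_sum, ← Complex.exp_add, ← Finset.mul_sum, mul_assoc, ← mul_add]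
  congr 2
  push_cast
  rw [Finset.sum_mul, ← Finset.sum_add_distrib]
  exact Finset.sum_congr rfl fun i _ => by ring

instance isProbabilityMeasure_unitAddTorus :
    IsProbabilityMeasure (volume : Measure (UnitAddTorus ι)) :=
  have : IsProbabilityMeasure (volume : Measure UnitAddCircle) := ⟨UnitAddCircle.measure_univ⟩
  inferInstanceAs (IsProbabilityMeasure (Measure.pi fun _ : ι => (volume : Measure UnitAddCircle)))

lemma integral_mFourier_eq_zero {n : ι → ℤ} (hn : n ≠ 0) :
    ∫ x : UnitAddTorus ι, UnitAddTorus.mFourier n x = 0 := by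
  obtain ⟨i, hi⟩ := Function.ne_iff.1 hn
  calc ∫ x : UnitAddTorus ι, UnitAddTorus.mFourier n x
      = ∏ j, ∫ x : UnitAddCircle, fourier (n j) x :=
        integral_fintype_prod_volume_eq_prod fun j (x : UnitAddCircle) => fourier (n j) x
    _ = 0 := Finset.prod_eq_zero (Finset.mem_univ i) (integral_fourier_eq_zero hi)

variable {κ : Type*} {l : Filter κ} {u v : κ → ℝ} {ω : ι → ℝ}

lemma tendsto_interval_average_mFourier_torusLine (hω : LinearIndependent ℤ ω) (θ : ι → ℝ)
    (huv : Tendsto (fun k => v k - u k) l atTop) (n : ι → ℤ) :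
    Tendsto (fun k => ⨍ τ in u k..v k, UnitAddTorus.mFourier n (torusLine ω θ τ)) l
      (nhds (∫ x, UnitAddTorus.mFourier n x)) := by
  rcases eq_or_ne n 0 with rfl | hn
  · simpa [UnitAddTorus.mFourier_zero] using tendsto_interval_average_const huv (1 : ℂ)
  · have hfreq : ∑ i, n i * ω i ≠ 0 := fun h =>
      hn <| funext <| Fintype.linearIndependent_iff.1 hω n (by simpa only [zsmul_eq_mul] using h)
    rw [integral_mFourier_eq_zero hn]
    simpa only [mFourier_torusLine, interval_average_eq, intervalIntegral.integral_const_mul,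
      mul_smul_comm, mul_zero] using (tendsto_interval_average_exp huv hfreq).const_mul
        (Complex.exp (Complex.I * (∑ i, n i * θ i : ℝ)))

theorem tendsto_interval_average_comp_torusLine (hω : LinearIndependent ℤ ω) (θ : ι → ℝ)
    (huv : Tendsto (fun k => v k - u k) l atTop) (f : C(UnitAddTorus ι, ℂ)) :
    Tendsto (fun k => ⨍ τ in u k..v k, f (torusLine ω θ τ)) l (nhds (∫ x, f x)) := by
  have average_eq (g : C(UnitAddTorus ι, ℂ)) (k : κ) : ⨍ τ in u k..v k, g (torusLine ω θ τ) =
      ∫ x, g x ∂(ProbabilityTheory.cond volume (Set.uIoc (u k) (v k))).map (torusLine ω θ) := by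
    rw [interval_average_eq_integral_cond, integral_map (continuous_torusLine ω θ).aemeasurable
      g.continuous.aestronglyMeasurable]
  simp only [average_eq]
  refine tendsto_integral_of_topologicalClosure_span_eq_top
    UnitAddTorus.span_mFourier_closure_eq_top ?_ f
  rintro _ ⟨n, rfl⟩
  simpa only [average_eq] using tendsto_interval_average_mFourier_torusLine hω θ huv n

theorem tendsto_interval_average_prod_torusLine (hω : LinearIndependent ℤ ω) (θ : ι → ℝ)
    (huv : Tendsto (fun k => v k - u k) l atTop) (F : ι → C(UnitAddCircle, ℂ)) :
    Tendsto (fun k => ⨍ τ in u k..v k, ∏ i, F i (torusLine ω θ τ i)) l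
      (nhds (∏ i, ∫ x, F i x)) := by
  rw [← integral_fintype_prod_volume_eq_prod fun i (x : UnitAddCircle) => F i x]
  exact tendsto_interval_average_comp_torusLine hω θ huv
    ⟨fun x => ∏ i, F i (x i), by fun_prop⟩

end KroneckerWeyl

lemma im_exp_I_mul_ofReal (x : ℝ) : (Complex.exp (Complex.I * x)).im = Real.sin x := by
  rw [mul_comm, Complex.exp_ofReal_mul_I_im]

/-- The function `x ↦ exp (i c sin (2πx))` on the unit circle `ℝ / ℤ`, whose mean is `J₀(c)`. -/
noncomputable def expSin (c : ℝ) : C(UnitAddCircle, ℂ) where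
  toFun x := Complex.exp (Complex.I * (c * (fourier 1 x).im : ℝ))

lemma integral_expSin (c : ℝ) : ∫ x, expSin c x = besselJ0 c := by
  have expSin_coe (x : ℝ) :
      expSin c x = Complex.exp (Complex.I * (c * Real.sin (2 * π * x) : ℝ)) := by
    have hangle : 2 * (π : ℂ) * Complex.I * x = Complex.I * (2 * π * x : ℝ) := by
      push_cast
      ring
    rw [expSin, ContinuousMap.coe_mk, fourier_coe_apply, Int.cast_one, mul_one, Complex.ofReal_one,
      div_one, hangle, im_exp_I_mul_ofReal]
  rw [← UnitAddCircle.intervalIntegral_preimage 0, besselJ0]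
  simp only [expSin_coe]
  rw [intervalIntegral.integral_comp_mul_left
    (fun φ => Complex.exp (Complex.I * (c * Real.sin φ : ℝ))) Real.two_pi_pos.ne']
  simp

lemma expSin_torusLine {ι : Type*} (c : ℝ) (ω θ : ι → ℝ) (τ : ℝ) (i : ι) :
    expSin c (torusLine ω θ τ i) =
      Complex.exp (Complex.I * (c * Real.sin (τ * ω i + θ i) : ℝ)) := by
  rw [expSin, ContinuousMap.coe_mk, fourier_torusLine, Int.cast_one, one_mul, im_exp_I_mul_ofReal]

lemma exp_im_sum_eq_prod_expSin {ι : Type*} (s : Finset ι) (ω a θ : ι → ℝ) (lam τ : ℝ) :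
    Complex.exp (Complex.I * (lam *
        (∑ i ∈ s, (a i : ℂ) * Complex.exp (Complex.I * (τ * ω i + θ i : ℝ))).im : ℝ)) =
      ∏ i ∈ s, expSin (a i * lam) (torusLine ω θ τ i) := by
  simp only [expSin_torusLine, ← Complex.exp_sum, ← Finset.mul_sum, ← Complex.ofReal_sum,
    Complex.im_sum, Complex.im_ofReal_mul, im_exp_I_mul_ofReal]
  simp only [Finset.mul_sum, mul_left_comm lam, mul_assoc]

theorem stmt2_general {ι κ : Type*} {s : Finset ι} {ω : ι → ℝ} (hω : LinearIndepOn ℤ ω (s : Set ι))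
    (a θ : ι → ℝ) (lam : ℝ) {l : Filter κ} {u v : κ → ℝ}
    (huv : Tendsto (fun k => v k - u k) l atTop) :
    Tendsto
      (fun k => ⨍ τ in u k..v k, Complex.exp (Complex.I * ((lam *
        (∑ p ∈ s, (a p : ℂ) * Complex.exp (Complex.I * ((τ * ω p + θ p : ℝ) : ℂ))).im : ℝ) : ℂ)))
      l (nhds (∏ p ∈ s, besselJ0 (a p * lam))) := by
  simp only [exp_im_sum_eq_prod_expSin, ← integral_expSin, ← Finset.prod_coe_sort s]
  exact tendsto_interval_average_prod_torusLine (ω := fun i : s => ω i) hω (fun i => θ i) huv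
    fun i => expSin (a i * lam)

theorem stmt2 (t : ℝ) (ht : 0 < t) (a θ : ℕ → ℝ)
    (ha : ∀ p, p.Prime → 0 < a p)
    (hθ : ∀ p, θ p ∈ Set.Ico (0 : ℝ) (2 * π)) (lam : ℝ) :
    Tendsto
      (fun T : ℝ => (1 / T) *
        ∫ τ in T..(2 * T), Complex.exp (Complex.I * ((lam * (primeDirichletX t a θ τ).im : ℝ) : ℂ)))
      atTop
      (nhds (∏ p ∈ primesUpTo t, besselJ0 (a p * lam))) := by
  simpa only [interval_average_two_mul, primeDirichletX] using
    stmt2_general (linearIndepOn_log_primesUpTo t) a θ lam tendsto_two_mul_sub_self_atTop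
end

section
/- For t > 0 let P_t(1/2+iτ) = ∑_{p ≤ t, p prime} p^{-(1/2+iτ)}. Then for every real x, lim_{t→∞} lim_{T→∞} (1/T) · Leb{ τ ∈ [T,2T] : Im P_t(1/2+iτ) ≤ x · √( (1/2) log log t ) } = Φ(x), where Φ(x) = (1/√(2π)) ∫_{-∞}^x e^{-u²/2} du is the standard normal distribution function; that is, Im P_t(1/2+iτ) / √((1/2) log log t) converges in distribution to a standard normal random variable. -/
open MeasureTheory Filter Real

/-- The truncated prime zeta function `P_t(1/2 + iτ) = ∑_{p ≤ t} p^{-(1/2+iτ)}`. -/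
noncomputable def primeZetaTrunc (t : ℝ) (τ : ℝ) : ℂ :=
  ∑ p ∈ primesUpTo t, (p : ℂ) ^ (-(1 / 2 + Complex.I * (τ : ℂ)))

/-- The standard normal distribution function `Φ(x)`. -/
noncomputable def stdNormalCDF (x : ℝ) : ℝ :=
  (1 / Real.sqrt (2 * π)) * ∫ u in Set.Iic x, Real.exp (-u ^ 2 / 2)

/-!
Write `Im P_t(1/2 + iτ) = -∑_{p ≤ t} sin (τ log p) / √p`. By unique factorization the numbers
`log p` are linearly independent over `ℤ`, so by Kronecker–Weyl the angles `τ log p` of a uniform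
`τ ∈ [T, 2T]` become, as `T → ∞`, independent and uniform on the circle. The limiting sum has no
atoms, hence the inner limit exists and is the distribution function of a sum of independent
centred variables, whose variance is `½ ∑_{p ≤ t} 1/p ∼ ½ log log t` by Mertens. After
normalization every single term is uniformly small, so the central limit theorem applies, through
the second-order Taylor expansion of the characteristic function at `0`.

Mertens' estimate comes from comparing `log n! = n log n + O(n)` with Legendre's formula and
Chebyshev's bound, which gives `∑_{p ≤ x} log p / p = log x + O(1)`, and from partial summation.
-/

section Mertens

open scoped Nat

theorem log_factorial_eq_sum_primesLE (n : ℕ) :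
    log (n ! : ℝ) = ∑ p ∈ n.primesLE, ((n !).factorization p : ℝ) * log p := by
  rw [Real.log_nat_eq_sum_factorization]
  refine Finsupp.sum_of_support_subset _ (fun p hp ↦ ?_) _ (by simp)
  rw [Nat.support_factorization, Nat.mem_primeFactors] at hp
  exact Nat.mem_primesLE.2 ⟨hp.1.dvd_factorial.1 hp.2.1, hp.1⟩

theorem div_le_factorization_factorial_add_one {p : ℕ} (hp : p.Prime) (n : ℕ) :
    (n / p : ℝ) ≤ (n !).factorization p + 1 := by
  have hle : n / p ≤ (n !).factorization p := by
    rw [Nat.factorization_factorial hp (Nat.lt_add_of_pos_right two_pos)]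
    simpa using Finset.single_le_sum (f := fun i ↦ n / p ^ i) (fun _ _ ↦ Nat.zero_le _)
      (show 1 ∈ Finset.Ico 1 (Nat.log p n + 2) by simp)
  calc (n / p : ℝ) ≤ (n / p : ℕ) + 1 := by
        rw [← Nat.floor_div_eq_div (K := ℝ)]; exact (Nat.lt_floor_add_one _).le
    _ ≤ (n !).factorization p + 1 := by gcongr

theorem factorization_factorial_le_div_sub_one {p : ℕ} (hp : p.Prime) (n : ℕ) :
    ((n !).factorization p : ℝ) ≤ n / (p - 1) := by
  calc ((n !).factorization p : ℝ) ≤ (n / (p - 1) : ℕ) := by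
        exact_mod_cast Nat.factorization_factorial_le_div_pred hp n
    _ ≤ n / (p - 1 : ℕ) := Nat.cast_div_le
    _ = n / (p - 1) := by rw [Nat.cast_pred hp.pos]

theorem sum_primesLE_log_div_le {n : ℕ} (hn : n ≠ 0) :
    ∑ p ∈ n.primesLE, log p / p ≤ log n + log 4 := by
  have hn0 : (0 : ℝ) < n := by positivity
  have hfactorial : log (n ! : ℝ) ≤ n * log n := by
    rw [← log_pow]
    exact log_le_log (by positivity) (by exact_mod_cast Nat.factorial_le_pow n)
  have htheta : ∑ p ∈ n.primesLE, log p ≤ log 4 * n := by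
    rw [← Chebyshev.theta_eq_sum_primesLE_log]
    exact Chebyshev.theta_le_log4_mul_x hn0.le
  refine le_of_mul_le_mul_left ?_ hn0
  calc n * ∑ p ∈ n.primesLE, log p / p = ∑ p ∈ n.primesLE, (n / p : ℝ) * log p := by
        rw [Finset.mul_sum]; exact Finset.sum_congr rfl fun p _ ↦ by ring
    _ ≤ ∑ p ∈ n.primesLE, (((n !).factorization p : ℝ) + 1) * log p := by
        gcongr with p hp
        exact div_le_factorization_factorial_add_one (Nat.mem_primesLE.1 hp).2 n
    _ = log (n ! : ℝ) + ∑ p ∈ n.primesLE, log p := by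
        simp only [log_factorial_eq_sum_primesLE, add_mul, one_mul, Finset.sum_add_distrib]
    _ ≤ n * (log n + log 4) := by linarith

theorem log_div_mul_sub_one_nonneg (k : ℕ) : 0 ≤ log k / (k * (k - 1)) := by
  rcases k.eq_zero_or_pos with rfl | hk
  · simp
  · have hk1 : (1 : ℝ) ≤ k := by exact_mod_cast hk
    exact div_nonneg (log_nonneg hk1) (mul_nonneg (by linarith) (by linarith))

theorem summable_log_div_mul_sub_one : Summable fun k : ℕ ↦ log k / (k * (k - 1)) := by
  have hsum : Summable fun k : ℕ ↦ 4 * ((k : ℝ) ^ (3 / 2 : ℝ))⁻¹ :=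
    (Real.summable_nat_rpow_inv.2 (by norm_num)).mul_left 4
  refine hsum.of_nonneg_of_le log_div_mul_sub_one_nonneg fun k ↦ ?_
  rcases lt_or_ge k 2 with hk | hk
  · interval_cases k <;> simp
  have hk2 : (2 : ℝ) ≤ k := by exact_mod_cast hk
  have hlog : log k ≤ 2 * √k := by
    have := log_le_rpow_div (x := k) (ε := 1 / 2) (by linarith) (by norm_num)
    rw [← sqrt_eq_rpow] at this
    linarith
  have hpow : (k : ℝ) ^ (3 / 2 : ℝ) = k * √k := by
    rw [show (3 / 2 : ℝ) = 1 + 1 / 2 by norm_num, rpow_add (by linarith), rpow_one, sqrt_eq_rpow]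
  calc log k / (k * (k - 1)) ≤ 2 * √k / (k * (k / 2)) := by gcongr; linarith
    _ = 4 * (k * √k)⁻¹ := by
        field_simp
        rw [sq_sqrt (by linarith)]
        ring
    _ = 4 * ((k : ℝ) ^ (3 / 2 : ℝ))⁻¹ := by rw [hpow]

theorem log_le_sum_primesLE_log_div_add {n : ℕ} (hn : n ≠ 0) :
    log n ≤ ∑ p ∈ n.primesLE, log p / p + (1 + ∑' k : ℕ, log k / (k * (k - 1))) := by
  have hn0 : (0 : ℝ) < n := by positivity
  have hstirling : n * log n - n ≤ log (n ! : ℝ) := by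
    have := Stirling.le_log_factorial_stirling hn
    have : 0 ≤ log n := log_natCast_nonneg n
    have : 0 ≤ log (2 * π) := log_nonneg (by linarith [pi_gt_three])
    linarith
  have htail : ∑ p ∈ n.primesLE, log p / (p * (p - 1)) ≤ ∑' k : ℕ, log k / (k * (k - 1)) :=
    summable_log_div_mul_sub_one.sum_le_tsum _ fun k _ ↦ log_div_mul_sub_one_nonneg k
  have hfactorial : log (n ! : ℝ)
      ≤ n * (∑ p ∈ n.primesLE, log p / p + ∑ p ∈ n.primesLE, log p / (p * (p - 1))) := by
    rw [log_factorial_eq_sum_primesLE, ← Finset.sum_add_distrib, Finset.mul_sum]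
    refine Finset.sum_le_sum fun p hp ↦ ?_
    have hp := (Nat.mem_primesLE.1 hp).2
    have hp2 : (2 : ℝ) ≤ p := by exact_mod_cast hp.two_le
    calc ((n !).factorization p : ℝ) * log p ≤ n / (p - 1) * log p := by
          gcongr; exact factorization_factorial_le_div_sub_one hp n
      _ = n * (log p / p + log p / (p * (p - 1))) := by
          have : (p : ℝ) - 1 ≠ 0 := by linarith
          have : (p : ℝ) ≠ 0 := by linarith
          field_simp
          ring
  refine le_of_mul_le_mul_left ?_ hn0
  linarith [mul_le_mul_of_nonneg_left htail hn0.le]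

theorem exists_abs_sum_primesLE_log_div_sub_log_le :
    ∃ C, ∀ x : ℝ, 1 ≤ x → |∑ p ∈ ⌊x⌋₊.primesLE, log p / p - log x| ≤ C := by
  set S : ℝ := ∑' k : ℕ, log k / (k * (k - 1))
  have hS : 0 ≤ S := tsum_nonneg log_div_mul_sub_one_nonneg
  refine ⟨log 4 + (2 + S), fun x hx ↦ ?_⟩
  have hfloor : ⌊x⌋₊ ≠ 0 := (Nat.floor_pos.2 hx).ne'
  have hfloor0 : (0 : ℝ) < ⌊x⌋₊ := by positivity
  have hle : log ⌊x⌋₊ ≤ log x := log_le_log hfloor0 (Nat.floor_le (by linarith))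
  have hge : log x ≤ log ⌊x⌋₊ + 1 := by
    have hratio : x / ⌊x⌋₊ ≤ 2 := by
      have : (1 : ℝ) ≤ ⌊x⌋₊ := by exact_mod_cast Nat.floor_pos.2 hx
      rw [div_le_iff₀ hfloor0]
      linarith [Nat.lt_floor_add_one x]
    have := log_le_sub_one_of_pos (div_pos (by linarith) hfloor0 : 0 < x / ⌊x⌋₊)
    rw [log_div (by linarith) hfloor0.ne'] at this
    linarith
  have hlog4 : 0 ≤ log 4 := log_nonneg (by norm_num)
  have hupper := sum_primesLE_log_div_le hfloor
  have hlower := log_le_sum_primesLE_log_div_add hfloor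
  rw [abs_le]
  constructor <;> linarith

theorem continuousOn_one_div_mul_log_pow (n : ℕ) :
    ContinuousOn (fun t : ℝ ↦ 1 / (t * log t ^ n)) (Set.Ioi 1) := by
  have hpos : ∀ t ∈ Set.Ioi (1 : ℝ), t ≠ 0 ∧ log t ≠ 0 := fun t ht ↦
    ⟨(zero_lt_one.trans ht).ne', (log_pos ht).ne'⟩
  exact continuousOn_const.div
    (continuousOn_id.mul ((continuousOn_log.mono fun t ht ↦ (hpos t ht).1).pow n))
    fun t ht ↦ mul_ne_zero (hpos t ht).1 (pow_ne_zero n (hpos t ht).2)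

theorem intervalIntegrable_one_div_mul_log_pow {a b : ℝ} (ha : 1 < a) (hb : 1 < b) (n : ℕ) :
    IntervalIntegrable (fun t : ℝ ↦ 1 / (t * log t ^ n)) volume a b :=
  ((continuousOn_one_div_mul_log_pow n).mono fun _ ht ↦
    (lt_min ha hb).trans_le ht.1).intervalIntegrable

theorem integral_one_div_mul_log {a b : ℝ} (ha : 1 < a) (hb : 1 < b) :
    ∫ t in a..b, 1 / (t * log t) = log (log b) - log (log a) := by
  refine intervalIntegral.integral_eq_sub_of_hasDerivAt (f := fun t ↦ log (log t)) (fun t ht ↦ ?_)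
    (by simpa using intervalIntegrable_one_div_mul_log_pow ha hb 1)
  have ht1 : 1 < t := (lt_min ha hb).trans_le ht.1
  exact ((hasDerivAt_log (by linarith)).log (log_pos ht1).ne').congr_deriv (by field_simp)

theorem integral_one_div_mul_log_sq {a b : ℝ} (ha : 1 < a) (hb : 1 < b) :
    ∫ t in a..b, 1 / (t * log t ^ 2) = 1 / log a - 1 / log b := by
  rw [intervalIntegral.integral_eq_sub_of_hasDerivAt (f := fun t ↦ -(log t)⁻¹) (fun t ht ↦ ?_)
    (intervalIntegrable_one_div_mul_log_pow ha hb 2)]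
  · ring
  · have ht1 : 1 < t := (lt_min ha hb).trans_le ht.1
    exact ((hasDerivAt_log (by linarith)).inv (log_pos ht1).ne').neg.congr_deriv (by field_simp)

theorem sum_div_log_eq {c : ℕ → ℝ} (h0 : c 0 = 0) (h1 : c 1 = 0) {x : ℝ} (hx : 2 ≤ x) :
    ∑ k ∈ Finset.Icc 0 ⌊x⌋₊, c k / log k = (∑ k ∈ Finset.Icc 0 ⌊x⌋₊, c k) / log x +
      ∫ t in 2..x, 1 / (t * log t ^ 2) * ∑ k ∈ Finset.Icc 0 ⌊t⌋₊, c k := by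
  have hderiv : ∀ t ∈ Set.Icc 2 x, HasDerivAt (fun t ↦ (log t)⁻¹) (-(1 / (t * log t ^ 2))) t := by
    intro t ht
    have ht1 : 1 < t := by linarith [ht.1]
    exact ((hasDerivAt_log (by linarith)).inv (log_pos ht1).ne').congr_deriv (by field_simp)
  have hint : IntegrableOn (deriv fun t ↦ (log t)⁻¹) (Set.Icc 2 x) := by
    rw [integrableOn_congr_fun (fun t ht ↦ (hderiv t ht).deriv) measurableSet_Icc]
    exact (((continuousOn_one_div_mul_log_pow 2).mono fun t ht ↦
      one_lt_two.trans_le ht.1).integrableOn_Icc).neg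
  have habel := sum_mul_eq_sub_integral_mul₁ c h0 h1 x
    (fun t ht ↦ (hderiv t ht).differentiableAt) hint
  rw [setIntegral_congr_fun measurableSet_Ioc fun t ht ↦ by
    rw [(hderiv t (Set.Ioc_subset_Icc_self ht)).deriv]] at habel
  simp only [div_eq_inv_mul _ (log _), habel, neg_mul, integral_neg, sub_neg_eq_add,
    intervalIntegral.integral_of_le hx]

theorem abs_integral_sum_sub_log_log_le {c : ℕ → ℝ} {C x : ℝ} (hx : 2 ≤ x)
    (hC : ∀ t : ℝ, 2 ≤ t → |∑ k ∈ Finset.Icc 0 ⌊t⌋₊, c k - log t| ≤ C) :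
    |(∫ t in 2..x, 1 / (t * log t ^ 2) * ∑ k ∈ Finset.Icc 0 ⌊t⌋₊, c k) -
      (log (log x) - log (log 2))| ≤ C / log 2 := by
  set A : ℝ → ℝ := fun t ↦ ∑ k ∈ Finset.Icc 0 ⌊t⌋₊, c k
  have hC0 : 0 ≤ C := (abs_nonneg _).trans (hC 2 le_rfl)
  have hx1 : 1 < x := by linarith
  have hint := intervalIntegrable_one_div_mul_log_pow one_lt_two hx1
  have hintA : IntervalIntegrable (fun t ↦ 1 / (t * log t ^ 2) * A t) volume 2 x := by
    rw [intervalIntegrable_iff_integrableOn_Icc_of_le hx]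
    exact integrableOn_mul_sum_Icc c zero_le_two
      ((intervalIntegrable_iff_integrableOn_Icc_of_le hx).1 (hint 2))
  have hsplit : (∫ t in 2..x, 1 / (t * log t ^ 2) * A t) - (log (log x) - log (log 2)) =
      ∫ t in 2..x, 1 / (t * log t ^ 2) * (A t - log t) := by
    rw [← integral_one_div_mul_log one_lt_two hx1,
      ← intervalIntegral.integral_sub hintA (by simpa using hint 1)]
    refine intervalIntegral.integral_congr fun t ht ↦ ?_
    have := log_pos ((lt_min one_lt_two hx1).trans_le ht.1)
    field_simp
  calc |(∫ t in 2..x, 1 / (t * log t ^ 2) * A t) - (log (log x) - log (log 2))|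
      ≤ ∫ t in 2..x, 1 / (t * log t ^ 2) * C := by
        rw [hsplit, ← norm_eq_abs]
        refine intervalIntegral.norm_integral_le_of_norm_le hx (ae_of_all _ fun t ht ↦ ?_)
          ((hint 2).mul_const C)
        have ht0 : 0 ≤ 1 / (t * log t ^ 2) := by have := ht.1; positivity
        rw [norm_eq_abs, abs_mul, abs_of_nonneg ht0]
        exact mul_le_mul_of_nonneg_left (hC t ht.1.le) ht0
    _ = (1 / log 2 - 1 / log x) * C := by
        rw [intervalIntegral.integral_mul_const, integral_one_div_mul_log_sq one_lt_two hx1]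
    _ ≤ 1 / log 2 * C := by
        gcongr
        exact sub_le_self _ (one_div_nonneg.2 (log_nonneg hx1.le))
    _ = C / log 2 := one_div_mul_eq_div _ _

theorem exists_abs_sum_div_log_sub_log_log_le {c : ℕ → ℝ} (h0 : c 0 = 0) (h1 : c 1 = 0) {C : ℝ}
    (hC : ∀ x : ℝ, 2 ≤ x → |∑ k ∈ Finset.Icc 0 ⌊x⌋₊, c k - log x| ≤ C) :
    ∃ K, ∀ x : ℝ, 2 ≤ x → |∑ k ∈ Finset.Icc 0 ⌊x⌋₊, c k / log k - log (log x)| ≤ K := by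
  refine ⟨1 + C / log 2 + (C / log 2 + |log (log 2)|), fun x hx ↦ ?_⟩
  have hC0 : 0 ≤ C := (abs_nonneg _).trans (hC 2 le_rfl)
  have hlog2 : 0 < log 2 := log_pos one_lt_two
  have hlogx : log 2 ≤ log x := log_le_log two_pos hx
  have hboundary : |(∑ k ∈ Finset.Icc 0 ⌊x⌋₊, c k) / log x - 1| ≤ C / log 2 := by
    rw [div_sub_one (by linarith), abs_div, abs_of_pos (by linarith : 0 < log x)]
    gcongr
    exact hC x hx
  have hintegral := abs_integral_sum_sub_log_log_le hx hC
  rw [sum_div_log_eq h0 h1 hx]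
  rw [abs_le] at hboundary hintegral ⊢
  constructor <;> linarith [neg_abs_le (log (log 2)), le_abs_self (log (log 2))]

theorem exists_abs_sum_primesLE_inv_sub_log_log_le :
    ∃ K, ∀ x : ℝ, 2 ≤ x → |∑ p ∈ ⌊x⌋₊.primesLE, (p : ℝ)⁻¹ - log (log x)| ≤ K := by
  obtain ⟨C, hC⟩ := exists_abs_sum_primesLE_log_div_sub_log_le
  obtain ⟨K, hK⟩ := exists_abs_sum_div_log_sub_log_log_le
    (c := fun k ↦ if k.Prime then log k / k else 0) (by simp) (by simp) (C := C) fun x hx ↦ by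
      simpa only [← Finset.sum_filter, ← Nat.primesLE_eq_filter_Icc_zero] using hC x (by linarith)
  refine ⟨K, fun x hx ↦ ?_⟩
  convert hK x hx using 3
  simp only [ite_div, zero_div, ← Finset.sum_filter, ← Nat.primesLE_eq_filter_Icc_zero]
  refine Finset.sum_congr rfl fun p hp ↦ ?_
  have := (log_pos (by exact_mod_cast (Nat.mem_primesLE.1 hp).2.one_lt : (1 : ℝ) < p)).ne'
  field_simp

theorem tendsto_log_log_atTop : Tendsto (fun x ↦ log (log x)) atTop atTop :=
  tendsto_log_atTop.comp tendsto_log_atTop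

theorem tendsto_sum_primesLE_inv_div_log_log :
    Tendsto (fun x : ℝ ↦ (∑ p ∈ ⌊x⌋₊.primesLE, (p : ℝ)⁻¹) / log (log x)) atTop (nhds 1) := by
  obtain ⟨K, hK⟩ := exists_abs_sum_primesLE_inv_sub_log_log_le
  have hbounded : (fun x : ℝ ↦ ∑ p ∈ ⌊x⌋₊.primesLE, (p : ℝ)⁻¹ - log (log x)) =O[atTop]
      fun _ ↦ (1 : ℝ) :=
    Asymptotics.IsBigO.of_bound K <| by
      filter_upwards [eventually_ge_atTop 2] with x hx
      simpa using hK x hx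
  have hequiv : Asymptotics.IsEquivalent atTop
      (fun x : ℝ ↦ ∑ p ∈ ⌊x⌋₊.primesLE, (p : ℝ)⁻¹) fun x ↦ log (log x) :=
    hbounded.trans_isLittleO (Asymptotics.isLittleO_const_left.2 <| .inr <|
      tendsto_norm_atTop_atTop.comp tendsto_log_log_atTop)
  exact (Asymptotics.isEquivalent_iff_tendsto_one
    (tendsto_log_log_atTop.eventually_ne_atTop 0)).1 hequiv

end Mertens

section LinearIndependence

theorem norm_prod_primes_zpow_padic {s : Finset Nat.Primes} (g : Nat.Primes → ℤ) {q : Nat.Primes}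
    (hq : q ∈ s) [Fact (q : ℕ).Prime] :
    ‖∏ p ∈ s, ((p : ℕ) : ℚ_[q]) ^ g p‖ = ((q : ℕ) : ℝ)⁻¹ ^ g q := by
  simp only [norm_prod, norm_zpow]
  rw [Finset.prod_eq_single_of_mem q hq fun p _ hpq ↦ ?_, Padic.norm_p]
  have hunit : ‖((p : ℕ) : ℚ_[q])‖ = 1 := by
    rw [Padic.norm_natCast_eq_one_iff, Nat.coprime_primes q.2 p.2]
    exact fun h ↦ hpq (Subtype.ext h.symm)
  rw [hunit, one_zpow]

-- An integer relation between the `log p` exponentiates to a multiplicative relation over `ℚ`,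
-- whose exponents are detected by the `q`-adic absolute values.
theorem linearIndependent_log_primes : LinearIndependent ℤ fun p : Nat.Primes ↦ log p := by
  rw [linearIndependent_iff']
  intro s g hg q hq
  have hpos : ∀ p ∈ s, (0 : ℝ) < ((p : ℕ) : ℝ) ^ g p := fun p _ ↦
    zpow_pos (by exact_mod_cast p.2.pos) _
  have hlog : log (∏ p ∈ s, ((p : ℕ) : ℝ) ^ g p) = 0 := by
    rw [log_prod fun p hp ↦ (hpos p hp).ne', ← hg]
    exact Finset.sum_congr rfl fun p _ ↦ by rw [log_zpow, zsmul_eq_mul]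
  have hprod : ∏ p ∈ s, ((p : ℕ) : ℚ) ^ g p = 1 := by
    have hreal := eq_one_of_pos_of_log_eq_zero (Finset.prod_pos hpos) hlog
    rw [← Rat.cast_inj (α := ℝ)]
    push_cast
    exact hreal
  have hprime : Fact (q : ℕ).Prime := ⟨q.2⟩
  have hnorm : ‖∏ p ∈ s, ((p : ℕ) : ℚ_[q]) ^ g p‖ = 1 := by
    rw [← norm_one (α := ℚ_[q]), ← Rat.cast_one, ← hprod]
    push_cast
    rfl
  rw [norm_prod_primes_zpow_padic g hq, inv_zpow, inv_eq_one] at hnorm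
  exact (zpow_eq_one_iff_right₀ (Nat.cast_nonneg _) (by exact_mod_cast q.2.one_lt.ne')).1 hnorm

end LinearIndependence

section KroneckerWeyl

open UnitAddTorus

variable {ι : Type*} [Fintype ι]

instance isProbabilityMeasure_volume_unitAddCircle :
    IsProbabilityMeasure (volume : Measure UnitAddCircle) :=
  ⟨UnitAddCircle.measure_univ⟩

theorem integral_fourier_eq_zero_s8 {n : ℤ} (hn : n ≠ 0) : ∫ θ : UnitAddCircle, fourier n θ = 0 :=
  integral_eq_zero_of_add_right_eq_neg (fourier_add_half_inv_index hn one_pos)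

theorem integral_mFourier_eq_zero_s8 {n : ι → ℤ} (hn : n ≠ 0) : ∫ θ, mFourier n θ = 0 := by
  obtain ⟨i, hi⟩ := Function.ne_iff.1 hn
  calc ∫ θ, mFourier n θ = ∏ i, ∫ θ : UnitAddCircle, fourier (n i) θ :=
        integral_fintype_prod_volume_eq_prod fun i (θ : UnitAddCircle) ↦ fourier (n i) θ
    _ = 0 := Finset.prod_eq_zero (Finset.mem_univ i) (integral_fourier_eq_zero_s8 hi)

theorem tendsto_integral_of_mem_span {X α : Type*} [TopologicalSpace X] [CompactSpace X]
    [SecondCountableTopology X] [MeasurableSpace X] [OpensMeasurableSpace X] {l : Filter α}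
    {μ : α → ProbabilityMeasure X} {P : ProbabilityMeasure X} {S : Set C(X, ℂ)}
    (h : ∀ F ∈ S, Tendsto (fun a ↦ ∫ x, F x ∂μ a) l (nhds (∫ x, F x ∂P))) {F : C(X, ℂ)}
    (hF : F ∈ Submodule.span ℂ S) : Tendsto (fun a ↦ ∫ x, F x ∂μ a) l (nhds (∫ x, F x ∂P)) := by
  have hint (ν : ProbabilityMeasure X) (F : C(X, ℂ)) : Integrable F ν :=
    F.continuous.integrable_of_hasCompactSupport (HasCompactSupport.of_compactSpace _)
  induction hF using Submodule.span_induction with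
  | mem F hF => exact h F hF
  | zero => simpa using tendsto_const_nhds
  | add F G _ _ hF hG =>
    simpa only [ContinuousMap.add_apply, integral_add (hint _ F) (hint _ G)] using hF.add hG
  | smul c F _ hF => simpa only [ContinuousMap.smul_apply, integral_smul] using hF.const_smul c

theorem tendsto_volume_of_tendsto_integral_mFourier {α : Type*} {l : Filter α}
    {μ : α → ProbabilityMeasure (UnitAddTorus ι)}
    (h : ∀ n : ι → ℤ, n ≠ 0 → Tendsto (fun a ↦ ∫ θ, mFourier n θ ∂μ a) l (nhds 0)) :
    Tendsto μ l (nhds ⟨volume, inferInstance⟩) := by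
  refine ProbabilityMeasure.tendsto_of_tight_of_separatesPoints ℂ .of_compactSpace
    (A := (mFourierSubalgebra ι).comap (BoundedContinuousFunction.toContinuousMapStarₐ ℂ))
    (fun x y hxy ↦ ?_) (fun g hg ↦ ?_)
  · obtain ⟨_, ⟨F, hF, rfl⟩, hFxy⟩ := mFourierSubalgebra_separatesPoints hxy
    exact ⟨F, ⟨F, ⟨.mkOfCompact F, hF, rfl⟩, rfl⟩, hFxy⟩
  · have hg : g.toContinuousMap ∈ Submodule.span ℂ (Set.range (mFourier (d := ι))) := by
      rw [← mFourierSubalgebra_coe]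
      exact hg
    refine tendsto_integral_of_mem_span ?_ hg
    rintro _ ⟨n, rfl⟩
    rcases eq_or_ne n 0 with rfl | hn
    · simpa [mFourier_zero] using tendsto_const_nhds
    · simpa only [ProbabilityMeasure.coe_mk, integral_mFourier_eq_zero_s8 hn] using h n hn

theorem tendsto_charFun_cocompact_of_absolutelyContinuous {ν : Measure ℝ} [SigmaFinite ν]
    (hν : ν ≪ volume) : Tendsto (charFun ν) (cocompact ℝ) (nhds 0) := by
  have hcharFun : ∀ ξ, charFun ν ξ =
      ∫ u, fourierChar (-(u * (-(2 * π)⁻¹ * ξ))) • ((ν.rnDeriv volume u).toReal : ℂ) := fun ξ ↦ by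
    rw [charFun_apply_real, ← integral_rnDeriv_smul hν]
    refine integral_congr_ae (ae_of_all _ fun u ↦ ?_)
    simp only [Circle.smul_def, fourierChar_apply, Complex.real_smul, smul_eq_mul]
    rw [mul_comm]
    congr 2
    push_cast
    field_simp
  simp only [funext hcharFun]
  refine (Real.tendsto_integral_exp_smul_cocompact _).comp ?_
  exact (Homeomorph.mulLeft₀ _ (neg_ne_zero.2 (by positivity))).isClosedEmbedding.tendsto_cocompact

/-- The point `(τ ωᵢ / 2π)ᵢ` of the torus reached at time `τ` by the linear flow with angular
frequencies `ωᵢ`. The circle is `ℝ / ℤ`, whence the factor `2π`. -/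
noncomputable def linearFlow (ω : ι → ℝ) (τ : ℝ) : UnitAddTorus ι :=
  fun i ↦ ((τ * ω i / (2 * π) : ℝ) : UnitAddCircle)

theorem continuous_linearFlow {ι : Type*} (ω : ι → ℝ) : Continuous (linearFlow ω) := by
  unfold linearFlow
  fun_prop

theorem mFourier_linearFlow (ω : ι → ℝ) (n : ι → ℤ) (τ : ℝ) :
    mFourier n (linearFlow ω τ) = Complex.exp (τ * (∑ i, n i • ω i : ℝ) * Complex.I) := by
  have hfactor : ∀ i, fourier (n i) (linearFlow ω τ i) =
      Complex.exp (τ * (n i • ω i : ℝ) * Complex.I) := fun i ↦ by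
    rw [linearFlow, fourier_coe_apply]
    congr 1
    push_cast
    field_simp
    rw [zsmul_eq_mul]
    ring
  simp only [mFourier, ContinuousMap.coe_mk, hfactor, ← Complex.exp_sum, ← Finset.sum_mul,
    ← Finset.mul_sum, Complex.ofReal_sum]

theorem integral_mFourier_linearFlow (ω : ι → ℝ) (n : ι → ℤ) (ν : Measure ℝ) (T : ℝ) :
    ∫ u, mFourier n (linearFlow ω (T * u)) ∂ν = charFun ν (T * ∑ i, n i • ω i) := by
  simp only [mFourier_linearFlow, charFun_apply_real]
  congr! 4 with u
  push_cast
  ring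

/-- The law of the linear flow at time `T u`, where the time `u` is random with law `ν`. -/
noncomputable def linearFlowLaw (ω : ι → ℝ) (ν : ProbabilityMeasure ℝ) (T : ℝ) :
    ProbabilityMeasure (UnitAddTorus ι) :=
  ν.map (f := fun u ↦ linearFlow ω (T * u))
    ((continuous_linearFlow ω).comp (continuous_const_mul T)).aemeasurable

theorem tendsto_linearFlowLaw {ω : ι → ℝ} (hω : LinearIndependent ℤ ω) {ν : ProbabilityMeasure ℝ}
    (hν : (ν : Measure ℝ) ≪ volume) :
    Tendsto (linearFlowLaw ω ν) atTop (nhds ⟨volume, inferInstance⟩) := by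
  refine tendsto_volume_of_tendsto_integral_mFourier fun n hn ↦ ?_
  have hfreq : ∑ i, n i • ω i ≠ 0 := fun h ↦ hn (funext (Fintype.linearIndependent_iff.1 hω n h))
  have hint : ∀ T, ∫ θ, mFourier n θ ∂linearFlowLaw ω ν T =
      charFun ν (T * ∑ i, n i • ω i) := fun T ↦ by
    rw [← integral_mFourier_linearFlow, linearFlowLaw, ProbabilityMeasure.toMeasure_map]
    exact integral_map ((continuous_linearFlow ω).comp (continuous_const_mul T)).aemeasurable
      (mFourier n).continuous.aestronglyMeasurable
  simp only [hint]
  exact (tendsto_charFun_cocompact_of_absolutelyContinuous hν).comp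
    ((Homeomorph.mulRight₀ _ hfreq).isClosedEmbedding.tendsto_cocompact.comp atTop_le_cocompact)

theorem tendsto_measureReal_of_null_frontier {X α : Type*} [TopologicalSpace X] [MeasurableSpace X]
    [HasOuterApproxClosed X] [OpensMeasurableSpace X] {l : Filter α} {μ : α → ProbabilityMeasure X}
    {P : ProbabilityMeasure X} (h : Tendsto μ l (nhds P)) {E : Set X}
    (hE : (P : Measure X) (frontier E) = 0) :
    Tendsto (fun a ↦ (μ a : Measure X).real E) l (nhds ((P : Measure X).real E)) :=
  (ENNReal.tendsto_toReal (measure_ne_top _ _)).comp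
    (ProbabilityMeasure.tendsto_measure_of_null_frontier_of_tendsto' h hE)

theorem one_div_mul_volume_Icc_inter {T : ℝ} (hT : 0 < T) (S : Set ℝ) :
    1 / T * (volume (Set.Icc T (2 * T) ∩ S)).toReal =
      (volume (Set.Icc 1 2 ∩ (fun u ↦ T * u) ⁻¹' S)).toReal := by
  have hIcc : Set.Icc 1 2 = (fun u ↦ T * u) ⁻¹' Set.Icc T (2 * T) := by
    rw [Set.preimage_const_mul_Icc₀ _ _ hT, div_self hT.ne', mul_div_cancel_right₀ _ hT.ne']
  rw [hIcc, ← Set.preimage_inter, Real.volume_preimage_mul_left hT.ne', ENNReal.toReal_mul,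
    ENNReal.toReal_ofReal (abs_nonneg _), abs_of_pos (inv_pos.2 hT), one_div]

theorem tendsto_volume_linearFlow_mem {ω : ι → ℝ} (hω : LinearIndependent ℤ ω)
    {E : Set (UnitAddTorus ι)} (hE : MeasurableSet E) (hfrontier : volume (frontier E) = 0) :
    Tendsto (fun T : ℝ ↦
        1 / T * (volume {τ : ℝ | τ ∈ Set.Icc T (2 * T) ∧ linearFlow ω τ ∈ E}).toReal)
      atTop (nhds (volume.real E)) := by
  obtain ⟨ν, hν⟩ : ∃ ν : ProbabilityMeasure ℝ, (ν : Measure ℝ) = volume.restrict (Set.Icc 1 2) :=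
    ⟨⟨_, ⟨by norm_num [Measure.restrict_apply_univ, Real.volume_Icc]⟩⟩, rfl⟩
  have hlim := tendsto_linearFlowLaw hω (hν ▸ Measure.absolutelyContinuous_restrict)
  refine (tendsto_measureReal_of_null_frontier hlim hfrontier).congr' ?_
  filter_upwards [eventually_gt_atTop 0] with T hT
  have hflow : Measurable fun u ↦ linearFlow ω (T * u) :=
    ((continuous_linearFlow ω).comp (continuous_const_mul T)).measurable
  rw [measureReal_def, linearFlowLaw, ProbabilityMeasure.toMeasure_map,
    Measure.map_apply hflow hE, hν, Measure.restrict_apply (hflow hE), Set.inter_comm]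
  exact (one_div_mul_volume_Icc_inter hT (linearFlow ω ⁻¹' E)).symm

end KroneckerWeyl

section CentralLimit

open ProbabilityTheory

theorem norm_prod_sub_prod_le {ι R : Type*} [NormedCommRing R] [NormOneClass R] {s : Finset ι}
    {a b : ι → R} (ha : ∀ i ∈ s, ‖a i‖ ≤ 1) (hb : ∀ i ∈ s, ‖b i‖ ≤ 1) :
    ‖∏ i ∈ s, a i - ∏ i ∈ s, b i‖ ≤ ∑ i ∈ s, ‖a i - b i‖ := by
  induction s using Finset.cons_induction with
  | empty => simp
  | cons j s hj ih =>
    rw [Finset.forall_mem_cons] at ha hb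
    have hprod : ‖∏ i ∈ s, a i‖ ≤ 1 :=
      (Finset.norm_prod_le _ _).trans (Finset.prod_le_one (fun _ _ ↦ norm_nonneg _) ha.2)
    rw [Finset.prod_cons, Finset.prod_cons, Finset.sum_cons]
    calc ‖a j * ∏ i ∈ s, a i - b j * ∏ i ∈ s, b i‖
        = ‖(a j - b j) * ∏ i ∈ s, a i + b j * (∏ i ∈ s, a i - ∏ i ∈ s, b i)‖ := by ring_nf
      _ ≤ ‖a j - b j‖ * ‖∏ i ∈ s, a i‖ + ‖b j‖ * ‖∏ i ∈ s, a i - ∏ i ∈ s, b i‖ :=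
        (norm_add_le _ _).trans (add_le_add (norm_mul_le _ _) (norm_mul_le _ _))
      _ ≤ ‖a j - b j‖ + ∑ i ∈ s, ‖a i - b i‖ :=
        add_le_add (mul_le_of_le_one_right (norm_nonneg _) hprod)
          ((mul_le_of_le_one_left (norm_nonneg _) hb.1).trans (ih ha.2 hb.2))

theorem charFun_sub_charFun_gaussianReal_isLittleO {μ : Measure ℝ} [IsProbabilityMeasure μ]
    (hmean : ∫ x, x ∂μ = 0) (hvar : ∫ x, x ^ 2 ∂μ = 1) :
    (fun ξ ↦ charFun μ ξ - charFun (gaussianReal 0 1) ξ) =o[nhds 0] fun ξ ↦ ξ ^ 2 := by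
  have hgauss : ∫ x, x ^ 2 ∂gaussianReal 0 1 = 1 := by
    rw [← variance_of_integral_eq_zero (X := fun x ↦ x) aemeasurable_id integral_id_gaussianReal]
    exact variance_id_gaussianReal
  have hμ := taylor_charFun_two (P := μ) aemeasurable_id hmean hvar
  have hγ := taylor_charFun_two (P := gaussianReal 0 1) aemeasurable_id integral_id_gaussianReal
    hgauss
  simp only [Measure.map_id] at hμ hγ
  simpa only [sub_sub_sub_cancel_right] using hμ.sub hγ

variable {ι : Type*} [Fintype ι]

theorem prod_charFun_gaussianReal_mul (w : ι → ℝ) (ξ : ℝ) :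
    ∏ i, charFun (gaussianReal 0 1) (w i * ξ) =
      Complex.exp (-((∑ i, w i ^ 2) * ξ ^ 2 / 2 : ℝ)) := by
  simp only [charFun_gaussianReal, ← Complex.exp_sum]
  congr 1
  push_cast
  rw [Finset.sum_mul, Finset.sum_div, ← Finset.sum_neg_distrib]
  refine Finset.sum_congr rfl fun i _ ↦ ?_
  ring

theorem charFun_map_dotProduct_pi (μ : Measure ℝ) [SigmaFinite μ] (w : ι → ℝ) (ξ : ℝ) :
    charFun ((Measure.pi fun _ ↦ μ).map (w ⬝ᵥ ·)) ξ = ∏ i, charFun μ (w i * ξ) := by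
  simp only [charFun_apply_real]
  rw [integral_map (by fun_prop) (by fun_prop), ← integral_fintype_prod_eq_prod]
  refine integral_congr_ae (ae_of_all _ fun x ↦ ?_)
  simp only [← Complex.exp_sum]
  congr 1
  simp only [dotProduct]
  push_cast
  rw [Finset.mul_sum, Finset.sum_mul]
  refine Finset.sum_congr rfl fun i _ ↦ ?_
  ring

/-- The law of the weighted sum `∑ i, w i * X i` of independent random variables `X i` with
common law `μ`. -/
noncomputable def weightedSumLaw (μ : ProbabilityMeasure ℝ) (w : ι → ℝ) : ProbabilityMeasure ℝ :=
  (ProbabilityMeasure.pi fun _ : ι ↦ μ).map (f := (w ⬝ᵥ ·)) (by fun_prop)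

theorem weightedSumLaw_inv_smul_Iic (μ : ProbabilityMeasure ℝ) (w : ι → ℝ) {c : ℝ} (hc : 0 < c)
    (x : ℝ) :
    (weightedSumLaw μ (c⁻¹ • w) : Measure ℝ) (Set.Iic x) =
      (weightedSumLaw μ w : Measure ℝ) (Set.Iic (x * c)) := by
  simp only [weightedSumLaw, ProbabilityMeasure.toMeasure_map]
  rw [Measure.map_apply (by fun_prop) measurableSet_Iic,
    Measure.map_apply (by fun_prop) measurableSet_Iic]
  congr 1
  ext y
  simp only [Set.mem_preimage, Set.mem_Iic, smul_dotProduct, smul_eq_mul]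
  rw [inv_mul_le_iff₀ hc, mul_comm]

variable {α : Type*} {l : Filter α} {κ : α → Type*} [∀ a, Fintype (κ a)] {w : ∀ a, κ a → ℝ}

theorem tendsto_sum_of_isLittleO_sq {E : Type*} [SeminormedAddCommGroup E] {f : ℝ → E}
    (hf : f =o[nhds 0] fun x ↦ x ^ 2) {c : ℝ} (hsum : Tendsto (fun a ↦ ∑ i, w a i ^ 2) l (nhds c))
    (hmax : ∀ ε > 0, ∀ᶠ a in l, ∀ i, |w a i| < ε) :
    Tendsto (fun a ↦ ∑ i, ‖f (w a i)‖) l (nhds 0) := by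
  have hlittle : (fun a ↦ ∑ i, ‖f (w a i)‖) =o[l] fun a ↦ ∑ i, w a i ^ 2 := by
    refine Asymptotics.isLittleO_iff.2 fun ε hε ↦ ?_
    obtain ⟨δ, hδ, hfδ⟩ := Metric.eventually_nhds_iff.1 (hf.def hε)
    filter_upwards [hmax δ hδ] with a ha
    rw [norm_of_nonneg (by positivity), norm_of_nonneg (by positivity), Finset.mul_sum]
    refine Finset.sum_le_sum fun i _ ↦ (hfδ ?_).trans_eq ?_
    · rw [Real.dist_0_eq_abs]
      exact ha i
    · rw [norm_of_nonneg (sq_nonneg _)]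
  exact (Asymptotics.isLittleO_one_iff ℝ).1 (hlittle.trans_isBigO (hsum.isBigO_one ℝ))

theorem tendsto_prod_charFun_mul {μ : Measure ℝ} [IsProbabilityMeasure μ]
    (hmean : ∫ x, x ∂μ = 0) (hvar : ∫ x, x ^ 2 ∂μ = 1)
    (hsum : Tendsto (fun a ↦ ∑ i, w a i ^ 2) l (nhds 1))
    (hmax : ∀ ε > 0, ∀ᶠ a in l, ∀ i, |w a i| < ε) (ξ : ℝ) :
    Tendsto (fun a ↦ ∏ i, charFun μ (w a i * ξ)) l (nhds (charFun (gaussianReal 0 1) ξ)) := by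
  have hgauss : Tendsto (fun a ↦ ∏ i, charFun (gaussianReal 0 1) (w a i * ξ)) l
      (nhds (charFun (gaussianReal 0 1) ξ)) := by
    have hexp : Continuous fun c : ℝ ↦ Complex.exp (-(c * ξ ^ 2 / 2 : ℝ)) := by fun_prop
    have hone : charFun (gaussianReal 0 1) ξ = Complex.exp (-(1 * ξ ^ 2 / 2 : ℝ)) := by
      simpa using prod_charFun_gaussianReal_mul (fun _ : Unit ↦ 1) ξ
    simp only [prod_charFun_gaussianReal_mul, hone]
    exact (hexp.tendsto 1).comp hsum
  have hsmall : (fun x ↦ charFun μ (x * ξ) - charFun (gaussianReal 0 1) (x * ξ)) =o[nhds 0]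
      fun x ↦ x ^ 2 := by
    have hzero : Tendsto (fun x ↦ x * ξ) (nhds 0) (nhds 0) :=
      (continuous_mul_const ξ).tendsto' 0 0 (zero_mul ξ)
    refine ((charFun_sub_charFun_gaussianReal_isLittleO hmean hvar).comp_tendsto
      hzero).trans_isBigO ?_
    simpa only [Function.comp_def, mul_pow, mul_comm] using
      (Asymptotics.isBigO_refl (fun x : ℝ ↦ x ^ 2) _).const_mul_left (ξ ^ 2)
  have hdiff : Tendsto (fun a ↦ ∏ i, charFun μ (w a i * ξ) -
      ∏ i, charFun (gaussianReal 0 1) (w a i * ξ)) l (nhds 0) :=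
    squeeze_zero_norm (fun a ↦ norm_prod_sub_prod_le (fun i _ ↦ norm_charFun_le_one _)
      fun i _ ↦ norm_charFun_le_one _) (tendsto_sum_of_isLittleO_sq hsmall hsum hmax)
  simpa using hdiff.add hgauss

theorem tendsto_weightedSumLaw [l.IsCountablyGenerated] {μ : ProbabilityMeasure ℝ}
    (hmean : ∫ x : ℝ, x ∂μ = 0) (hvar : ∫ x : ℝ, x ^ 2 ∂μ = 1)
    (hsum : Tendsto (fun a ↦ ∑ i, w a i ^ 2) l (nhds 1))
    (hmax : ∀ ε > 0, ∀ᶠ a in l, ∀ i, |w a i| < ε) :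
    Tendsto (fun a ↦ weightedSumLaw μ (w a)) l (nhds ⟨gaussianReal 0 1, inferInstance⟩) := by
  refine tendsto_of_seq_tendsto fun u hu ↦ ProbabilityMeasure.tendsto_of_tendsto_charFun fun ξ ↦ ?_
  have hcharFun : ∀ a, charFun (weightedSumLaw μ (w a)) ξ = ∏ i, charFun μ (w a i * ξ) :=
    fun a ↦ charFun_map_dotProduct_pi μ (w a) ξ
  exact ((tendsto_prod_charFun_mul hmean hvar hsum hmax ξ).comp hu).congr
    fun n ↦ (hcharFun (u n)).symm

end CentralLimit

section NonatomicSums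

open ProbabilityTheory

theorem nullSingletonClass_conv {G : Type*} [AddGroup G] [MeasurableSpace G] [MeasurableAdd₂ G]
    [MeasurableSingletonClass G] (μ ν : Measure G) [SFinite ν] [NullSingletonClass ν] :
    NullSingletonClass (μ ∗ ν) := by
  refine ⟨fun c ↦ ?_⟩
  have hfiber : ∀ x : G, (fun y ↦ x + y) ⁻¹' {c} = {-x + c} := fun x ↦ by
    ext y
    simp [eq_neg_add_iff_add_eq]
  rw [Measure.conv, Measure.map_apply measurable_add (measurableSet_singleton c),
    Measure.prod_apply (measurable_add (measurableSet_singleton c))]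
  simp only [← Set.preimage_comp, Function.comp_def, hfiber, measure_singleton, lintegral_zero]

theorem nullSingletonClass_map {α β : Type*} [MeasurableSpace α] [MeasurableSpace β]
    [MeasurableSingletonClass β] {μ : Measure α} {f : α → β} (hf : Measurable f)
    (h : ∀ c, μ (f ⁻¹' {c}) = 0) : NullSingletonClass (μ.map f) :=
  ⟨fun c ↦ (Measure.map_apply hf (measurableSet_singleton c)).trans (h c)⟩

theorem nullSingletonClass_weightedSumLaw {ι : Type*} [Fintype ι] {μ : ProbabilityMeasure ℝ}
    [NullSingletonClass (μ : Measure ℝ)] {w : ι → ℝ} (hw : w ≠ 0) :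
    NullSingletonClass (weightedSumLaw μ w : Measure ℝ) := by
  classical
  obtain ⟨j, hj⟩ := Function.ne_iff.1 hw
  have hindep : iIndepFun (fun i (x : ι → ℝ) ↦ w i * x i) (Measure.pi fun _ ↦ (μ : Measure ℝ)) :=
    iIndepFun_pi fun i ↦ (measurable_const_mul (w i)).aemeasurable
  have hmeas : ∀ i, Measurable fun x : ι → ℝ ↦ w i * x i := fun i ↦ by fun_prop
  have hterm : NullSingletonClass
      ((Measure.pi fun _ ↦ (μ : Measure ℝ)).map fun x : ι → ℝ ↦ w j * x j) := by
    refine nullSingletonClass_map (hmeas j) fun c ↦ ?_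
    have hpre : (fun x : ι → ℝ ↦ w j * x j) ⁻¹' {c} = (fun x ↦ x j) ⁻¹' {c / w j} := by
      ext x
      simp [eq_div_iff (show w j ≠ 0 from hj), mul_comm]
    rw [hpre, (measurePreserving_eval _ j).measure_preimage
      (nullMeasurableSet_singleton _),
      measure_singleton]
  have hsplit : (w ⬝ᵥ ·) = (∑ i ∈ Finset.univ.erase j, fun x : ι → ℝ ↦ w i * x i) +
      fun x ↦ w j * x j := by
    ext x
    simp [dotProduct, Finset.sum_erase_eq_sub]
  have hconv := (hindep.indepFun_finsetSum_of_notMem hmeas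
    (Finset.notMem_erase j Finset.univ)).map_add_eq_map_conv_map (by fun_prop) (hmeas j)
  rw [weightedSumLaw, ProbabilityMeasure.toMeasure_map, ProbabilityMeasure.toMeasure_pi, hsplit,
    hconv]
  exact nullSingletonClass_conv _ _

end NonatomicSums

section RandomSine

theorem nullSingletonClass_volume_unitAddCircle :
    NullSingletonClass (volume : Measure UnitAddCircle) := by
  refine ⟨fun θ ↦ ?_⟩
  rw [← Metric.closedBall_zero, AddCircle.volume_closedBall]
  simp

/-- The function `√2 sin (2πθ)` on the circle `ℝ / ℤ`, normalized to have variance one. -/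
noncomputable def normalizedSine (θ : UnitAddCircle) : ℝ :=
  √2 * (fourier 1 θ).im

theorem continuous_normalizedSine : Continuous normalizedSine := by
  unfold normalizedSine
  fun_prop

theorem integral_normalizedSine : ∫ θ, normalizedSine θ = 0 :=
  integral_eq_zero_of_add_right_eq_neg (g := ((1 / 2 / (1 : ℤ) : ℝ) : UnitAddCircle)) fun θ ↦ by
    have := fourier_add_half_inv_index (T := 1) one_ne_zero one_pos θ
    simp only [normalizedSine, this, Complex.neg_im, mul_neg]

theorem normalizedSine_sq (θ : UnitAddCircle) :
    normalizedSine θ ^ 2 = 1 - (fourier 2 θ).re := by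
  have hnorm : (fourier 1 θ).re ^ 2 + (fourier 1 θ).im ^ 2 = 1 := by
    rw [sq, sq, ← Complex.normSq_apply, fourier_one, Circle.normSq_coe]
  have hdouble : fourier 2 θ = fourier 1 θ * fourier 1 θ := fourier_add (m := 1) (n := 1)
  rw [normalizedSine, mul_pow, sq_sqrt zero_le_two, hdouble, Complex.mul_re]
  linarith

theorem integral_normalizedSine_sq : ∫ θ, normalizedSine θ ^ 2 = 1 := by
  have hint : Integrable (fun θ : UnitAddCircle ↦ fourier 2 θ) :=
    (fourier 2).continuous.integrable_of_hasCompactSupport (HasCompactSupport.of_compactSpace _)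
  have hre : ∫ θ : UnitAddCircle, (fourier 2 θ).re = 0 := by
    rw [← Complex.zero_re, ← integral_fourier_eq_zero_s8 two_ne_zero]
    exact integral_re hint
  calc ∫ θ, normalizedSine θ ^ 2 = ∫ θ : UnitAddCircle, (1 - (fourier 2 θ).re) :=
        integral_congr_ae (ae_of_all _ normalizedSine_sq)
    _ = (∫ _ : UnitAddCircle, 1) - ∫ θ : UnitAddCircle, (fourier 2 θ).re :=
        integral_sub (integrable_const 1) hint.re
    _ = 1 := by rw [hre, integral_const, probReal_univ, one_smul, sub_zero]

theorem finite_setOf_norm_eq_and_im_eq (r c : ℝ) : {z : ℂ | ‖z‖ = r ∧ z.im = c}.Finite := by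
  refine (Set.toFinite {⟨√(r ^ 2 - c ^ 2), c⟩, ⟨-√(r ^ 2 - c ^ 2), c⟩}).subset ?_
  rintro z ⟨rfl, rfl⟩
  have hre : ‖z‖ ^ 2 - z.im ^ 2 = z.re ^ 2 := by
    rw [Complex.sq_norm, Complex.normSq_apply]
    ring
  rw [hre, sqrt_sq_eq_abs]
  rcases abs_choice z.re with h | h <;> simp [h, Complex.ext_iff]

theorem finite_preimage_normalizedSine (c : ℝ) : (normalizedSine ⁻¹' {c}).Finite := by
  have hinj : Function.Injective fun θ : UnitAddCircle ↦ (fourier 1 θ : ℂ) := by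
    simp only [fourier_one]
    exact Circle.coe_injective.comp (AddCircle.injective_toCircle one_ne_zero)
  refine ((finite_setOf_norm_eq_and_im_eq 1 (c / √2)).preimage hinj.injOn).subset ?_
  rintro θ rfl
  simpa [normalizedSine] using Circle.norm_coe _

/-- The law of `√2 sin Θ` for a uniformly distributed angle `Θ`. -/
noncomputable def sineLaw : ProbabilityMeasure ℝ :=
  ProbabilityMeasure.map (Ω := UnitAddCircle) ⟨volume, inferInstance⟩
    continuous_normalizedSine.aemeasurable

instance nullSingletonClass_sineLaw : NullSingletonClass (sineLaw : Measure ℝ) :=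
  nullSingletonClass_map continuous_normalizedSine.measurable fun c ↦
    have := nullSingletonClass_volume_unitAddCircle
    (finite_preimage_normalizedSine c).measure_zero volume

theorem integral_sineLaw : ∫ x : ℝ, x ∂sineLaw = 0 :=
  (integral_map continuous_normalizedSine.aemeasurable (by fun_prop)).trans integral_normalizedSine

theorem integral_sq_sineLaw : ∫ x : ℝ, x ^ 2 ∂sineLaw = 1 :=
  (integral_map continuous_normalizedSine.aemeasurable (by fun_prop)).trans
    integral_normalizedSine_sq

variable {ι : Type*} [Fintype ι]

/-- The weighted sum `∑ i, w i √2 sin (2πθᵢ)` of sines of the coordinates of a point of the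
torus. -/
noncomputable def sineSum (w : ι → ℝ) (θ : UnitAddTorus ι) : ℝ :=
  w ⬝ᵥ fun i ↦ normalizedSine (θ i)

theorem continuous_sineSum (w : ι → ℝ) : Continuous (sineSum w) :=
  continuous_finsetSum _ fun i _ ↦
    (continuous_normalizedSine.comp (continuous_apply i)).const_mul (w i)

theorem map_sineSum_volume (w : ι → ℝ) :
    (volume : Measure (UnitAddTorus ι)).map (sineSum w) = weightedSumLaw sineLaw w := by
  have hsine : Measurable normalizedSine := continuous_normalizedSine.measurable
  have hpi : (volume : Measure (UnitAddTorus ι)).map (fun θ i ↦ normalizedSine (θ i)) =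
      Measure.pi fun _ ↦ (sineLaw : Measure ℝ) :=
    Measure.pi_map_pi fun _ ↦ hsine.aemeasurable
  rw [weightedSumLaw, ProbabilityMeasure.toMeasure_map, ProbabilityMeasure.toMeasure_pi, ← hpi,
    Measure.map_map (by fun_prop) (by fun_prop)]
  rfl

end RandomSine

section PrimeZeta

open ProbabilityTheory

theorem prime_of_mem_primesUpTo {t : ℝ} {p : ℕ} (hp : p ∈ primesUpTo t) : p.Prime :=
  (Finset.mem_filter.1 hp).2

theorem linearIndependent_log_primesUpTo (t : ℝ) :
    LinearIndependent ℤ fun p : primesUpTo t ↦ log p :=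
  linearIndependent_log_primes.comp
    (fun p : primesUpTo t ↦ (⟨p, prime_of_mem_primesUpTo p.2⟩ : Nat.Primes))
    fun _ _ h ↦ Subtype.ext (Subtype.mk.inj h)

/-- The weights expressing `Im P_t(1/2 + iτ) = -∑ sin (τ log p) / √p` as a weighted sum of
normalized sines. -/
noncomputable def primeWeight (t : ℝ) (p : primesUpTo t) : ℝ :=
  -(√(2 * p))⁻¹

theorem natCast_cpow_neg_half_add_im {p : ℕ} (hp : p ≠ 0) (τ : ℝ) :
    ((p : ℂ) ^ (-(1 / 2 + Complex.I * (τ : ℂ)))).im = -((√p)⁻¹ * sin (τ * log p)) := by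
  have hexp : (log p : ℂ) * -(1 / 2 + Complex.I * τ) =
      ((-(log p / 2) : ℝ) : ℂ) + ((-(τ * log p) : ℝ) : ℂ) * Complex.I := by
    push_cast
    ring
  have hsqrt : exp (-(log p / 2)) = (√p)⁻¹ := by
    rw [exp_neg, ← log_sqrt (Nat.cast_nonneg p), exp_log (by positivity)]
  rw [Complex.cpow_def_of_ne_zero (Nat.cast_ne_zero.2 hp), ← Complex.natCast_log, hexp,
    Complex.exp_add, ← Complex.ofReal_exp, hsqrt, Complex.im_ofReal_mul,
    Complex.exp_ofReal_mul_I_im, sin_neg, mul_neg]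

theorem normalizedSine_linearFlow {ι : Type*} (ω : ι → ℝ) (τ : ℝ) (i : ι) :
    normalizedSine (linearFlow ω τ i) = √2 * sin (τ * ω i) := by
  have hangle : 2 * (π : ℂ) * Complex.I * (1 : ℤ) * ((τ * ω i / (2 * π) : ℝ) : ℂ) / (1 : ℝ) =
      ((τ * ω i : ℝ) : ℂ) * Complex.I := by
    push_cast
    field_simp
  rw [normalizedSine, linearFlow, fourier_coe_apply, hangle, Complex.exp_ofReal_mul_I_im]

theorem primeZetaTrunc_im (t τ : ℝ) :
    (primeZetaTrunc t τ).im =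
      sineSum (primeWeight t) (linearFlow (fun p : primesUpTo t ↦ log p) τ) := by
  rw [primeZetaTrunc, Complex.im_sum, ← Finset.sum_coe_sort]
  refine Finset.sum_congr rfl fun p _ ↦ ?_
  beta_reduce
  rw [natCast_cpow_neg_half_add_im (prime_of_mem_primesUpTo p.2).ne_zero,
    normalizedSine_linearFlow, primeWeight, sqrt_mul zero_le_two, mul_inv]
  field_simp

theorem tendsto_volume_primeZetaTrunc_im_le {t : ℝ} (ht : 2 ≤ t) (c : ℝ) :
    Tendsto (fun T : ℝ ↦ (1 / T) *
        (volume {τ : ℝ | τ ∈ Set.Icc T (2 * T) ∧ (primeZetaTrunc t τ).im ≤ c}).toReal)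
      atTop (nhds ((weightedSumLaw sineLaw (primeWeight t) : Measure ℝ).real (Set.Iic c))) := by
  have htwo : 2 ∈ primesUpTo t :=
    Nat.mem_primesLE.2 ⟨Nat.le_floor (by exact_mod_cast ht), Nat.prime_two⟩
  have hweight : primeWeight t ≠ 0 := fun h ↦ by
    simpa [primeWeight] using congrFun h ⟨2, htwo⟩
  have hcont := continuous_sineSum (primeWeight t)
  have hfrontier : volume (frontier (sineSum (primeWeight t) ⁻¹' Set.Iic c)) = 0 := by
    have hatom := nullSingletonClass_weightedSumLaw (μ := sineLaw) hweight
    refine measure_mono_null (frontier_le_subset_eq hcont continuous_const) ?_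
    have := measure_singleton (μ := (weightedSumLaw sineLaw (primeWeight t) : Measure ℝ)) c
    rwa [← map_sineSum_volume, Measure.map_apply hcont.measurable (measurableSet_singleton c)]
      at this
  rw [← map_sineSum_volume, map_measureReal_apply hcont.measurable measurableSet_Iic]
  simp only [primeZetaTrunc_im]
  exact tendsto_volume_linearFlow_mem
    (linearIndependent_log_primesUpTo t) (hcont.measurable measurableSet_Iic) hfrontier

theorem primeWeight_sq (t : ℝ) (p : primesUpTo t) : primeWeight t p ^ 2 = (2 * (p : ℝ))⁻¹ := by
  rw [primeWeight, neg_sq, inv_pow, sq_sqrt (by positivity)]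

theorem abs_primeWeight_le_one (t : ℝ) (p : primesUpTo t) : |primeWeight t p| ≤ 1 := by
  have hp : (1 : ℝ) ≤ p := by exact_mod_cast (prime_of_mem_primesUpTo p.2).one_le
  rw [← sq_le_one_iff_abs_le_one, primeWeight_sq]
  exact inv_le_one_of_one_le₀ (by linarith)

/-- The standard deviation `√(½ log log t)` by which `Im P_t` is normalized. -/
noncomputable def primeZetaScale (t : ℝ) : ℝ :=
  √((1 / 2) * log (log t))

theorem tendsto_primeZetaScale_atTop : Tendsto primeZetaScale atTop atTop :=
  tendsto_sqrt_atTop.comp (tendsto_log_log_atTop.const_mul_atTop one_half_pos)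

theorem tendsto_sum_scaled_primeWeight_sq :
    Tendsto (fun t ↦ ∑ p, ((primeZetaScale t)⁻¹ • primeWeight t) p ^ 2) atTop (nhds 1) := by
  refine tendsto_sum_primesLE_inv_div_log_log.congr' ?_
  filter_upwards [tendsto_log_log_atTop.eventually_gt_atTop 0] with t ht
  simp only [Pi.smul_apply, smul_eq_mul, mul_pow, primeWeight_sq, inv_pow, primeZetaScale]
  rw [sq_sqrt (by positivity), ← Finset.mul_sum,
    Finset.sum_coe_sort (primesUpTo t) fun p ↦ (2 * (p : ℝ))⁻¹]
  simp only [mul_inv, ← Finset.mul_sum]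
  change (∑ p ∈ primesUpTo t, (p : ℝ)⁻¹) / _ = _
  field_simp

theorem eventually_abs_scaled_primeWeight_lt {ε : ℝ} (hε : 0 < ε) :
    ∀ᶠ t in atTop, ∀ p, |((primeZetaScale t)⁻¹ • primeWeight t) p| < ε := by
  filter_upwards [tendsto_primeZetaScale_atTop.inv_tendsto_atTop.eventually_lt_const hε,
    tendsto_primeZetaScale_atTop.eventually_gt_atTop 0] with t htε ht p
  rw [Pi.smul_apply, smul_eq_mul, abs_mul, abs_of_pos (inv_pos.2 ht)]
  exact (mul_le_of_le_one_right (inv_pos.2 ht).le (abs_primeWeight_le_one t p)).trans_lt htε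

theorem stdNormalCDF_eq_gaussianReal (x : ℝ) :
    stdNormalCDF x = (gaussianReal 0 1).real (Set.Iic x) := by
  rw [measureReal_def, gaussianReal_apply_eq_integral _ one_ne_zero, ENNReal.toReal_ofReal
    (integral_nonneg fun u ↦ gaussianPDFReal_nonneg _ _ _), stdNormalCDF, ← integral_const_mul]
  simp [gaussianPDFReal]

theorem tendsto_weightedSumLaw_primeWeight (x : ℝ) :
    Tendsto (fun t ↦ (weightedSumLaw sineLaw (primeWeight t) : Measure ℝ).real
      (Set.Iic (x * primeZetaScale t))) atTop (nhds (stdNormalCDF x)) := by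
  have hatom : NullSingletonClass (gaussianReal 0 1) := nullSingletonClass_gaussianReal one_ne_zero
  have hclt := tendsto_weightedSumLaw integral_sineLaw integral_sq_sineLaw
    tendsto_sum_scaled_primeWeight_sq fun ε ↦ eventually_abs_scaled_primeWeight_lt
  have hfrontier : gaussianReal 0 1 (frontier (Set.Iic x)) = 0 := by
    rw [frontier_Iic, measure_singleton]
  rw [stdNormalCDF_eq_gaussianReal]
  refine (tendsto_measureReal_of_null_frontier hclt hfrontier).congr' ?_
  filter_upwards [tendsto_primeZetaScale_atTop.eventually_gt_atTop 0] with t ht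
  rw [measureReal_def, weightedSumLaw_inv_smul_Iic _ _ ht, measureReal_def]

end PrimeZeta

theorem stmt8 (x : ℝ) :
    ∃ L : ℝ → ℝ,
      (∀ᶠ t in (atTop : Filter ℝ),
        Tendsto
          (fun T : ℝ => (1 / T) *
            (volume {τ : ℝ | τ ∈ Set.Icc T (2 * T) ∧
              (primeZetaTrunc t τ).im ≤ x * Real.sqrt ((1 / 2) * Real.log (Real.log t))}).toReal)
          atTop (nhds (L t))) ∧
      Tendsto L atTop (nhds (stdNormalCDF x)) := by
  refine ⟨fun t ↦ (weightedSumLaw sineLaw (primeWeight t) : Measure ℝ).real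
    (Set.Iic (x * primeZetaScale t)), ?_, tendsto_weightedSumLaw_primeWeight x⟩
  filter_upwards [eventually_ge_atTop 2] with t ht
  exact tendsto_volume_primeZetaTrunc_im_le ht (x * primeZetaScale t)
end

section
/- For every real Δ ≠ 0, the limit lim_{t→∞} ∑_{p ≤ t, p prime} p^{-(1+iΔ)} exists (as a complex number); that is, the prime zeta function P(1+iΔ), defined as the limit of its partial sums over primes in increasing order, converges everywhere on the 1-line except at Δ = 0. -/
open Filter

/-!
The coefficients `log p` on primes have partial sums `O(n)` (Chebyshev), and their Dirichlet
series differs from `-ζ' / ζ` by a series converging for `1 / 2 < re s`; since `ζ` has no zero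
on `re s = 1`, it continues analytically across that line away from `s = 1`. For such a series,
Newman's argument bounds the partial sums `S_N(s₀)` at a boundary point `s₀`: on a small circle
of radius `R` around `s₀`, the difference `(F(s) - S_N(s)) * N ^ (s - s₀)` is `O(1 / |re (s -
s₀)|)` uniformly in `N`, from the tail of the series on the right and from the finite sum on the
left. The kernel `1 + ((s - s₀) / R) ^ 2` has norm `2 * |re (s - s₀)| / R` on the circle, so it
absorbs this singularity and the maximum principle applies. Boundedness of `∑ log p * p ^ (-s₀)`
yields convergence of `∑ p ^ (-s₀)` by Dirichlet's test with the weights `1 / log n`.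
-/

open Finset Topology

section SummationByParts

lemma sum_Ioc_mul_le_sum_Ioc_mul_of_antitone {R : Type*} [CommRing R] [LinearOrder R]
    [IsStrictOrderedRing R] {a b f : ℕ → R} (hf : Antitone f) (hf₀ : ∀ n, 0 ≤ f n)
    (hab : ∀ n, ∑ k ∈ Ioc 0 n, a k ≤ ∑ k ∈ Ioc 0 n, b k) (n : ℕ) :
    ∑ k ∈ Ioc 0 n, a k * f k ≤ ∑ k ∈ Ioc 0 n, b k * f k := by
  suffices (∑ k ∈ Ioc 0 n, b k - ∑ k ∈ Ioc 0 n, a k) * f n ≤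
      ∑ k ∈ Ioc 0 n, b k * f k - ∑ k ∈ Ioc 0 n, a k * f k from
    sub_nonneg.1 ((mul_nonneg (sub_nonneg.2 (hab n)) (hf₀ n)).trans this)
  induction n with
  | zero => simp
  | succ n ih =>
    have hstep := mul_le_mul_of_nonneg_left (hf n.le_succ) (sub_nonneg.2 (hab n))
    simp only [sum_Ioc_succ_top n.zero_le]
    linarith

lemma sum_Ioc_rpow_le {N M : ℕ} {r : ℝ} (hN : N ≠ 0) (hNM : N ≤ M) (hr : r ≤ 0) (hr' : r ≠ -1) :
    ∑ n ∈ Ioc N M, (n : ℝ) ^ r ≤ ((M : ℝ) ^ (r + 1) - (N : ℝ) ^ (r + 1)) / (r + 1) := by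
  have hN₀ : (0 : ℝ) < N := by positivity
  have hanti : AntitoneOn (fun x : ℝ ↦ x ^ r) (Set.Icc N M) := fun x hx y _ hxy ↦
    Real.rpow_le_rpow_of_nonpos (hN₀.trans_le hx.1) hxy hr
  have hzero : (0 : ℝ) ∉ Set.uIcc (N : ℝ) M := by
    rw [Set.uIcc_of_le (by exact_mod_cast hNM)]
    exact fun h ↦ hN₀.not_ge h.1
  calc ∑ n ∈ Ioc N M, (n : ℝ) ^ r = ∑ n ∈ Ico N M, ((n + 1 : ℕ) : ℝ) ^ r := by
        rw [sum_Ico_add' (fun n : ℕ ↦ (n : ℝ) ^ r), Ico_add_one_add_one_eq_Ioc]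
    _ ≤ ∫ x in (N : ℝ)..M, x ^ r := hanti.sum_le_integral_Ico hNM
    _ = _ := integral_rpow (.inr ⟨hr', hzero⟩)

lemma sum_Ioc_mul_max_rpow_le {a : ℕ → ℝ} {C r : ℝ} {N M : ℕ} (hC : 0 ≤ C)
    (ha : ∀ n : ℕ, ∑ k ∈ Ioc 0 n, a k ≤ C * n) (hN : N ≠ 0) (hNM : N ≤ M) (hr : r ≤ 0)
    (hr' : r ≠ -1) :
    ∑ n ∈ Ioc 0 M, a n * ((max n N : ℕ) : ℝ) ^ r ≤
      C * ((N : ℝ) ^ (r + 1) + ((M : ℝ) ^ (r + 1) - (N : ℝ) ^ (r + 1)) / (r + 1)) := by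
  have hN₀ : (0 : ℝ) < N := by positivity
  have hanti : Antitone fun n : ℕ ↦ ((max n N : ℕ) : ℝ) ^ r := fun m n hmn ↦
    Real.rpow_le_rpow_of_nonpos (hN₀.trans_le (by simp)) (by gcongr) hr
  have hhead : ∑ n ∈ Ioc 0 N, ((max n N : ℕ) : ℝ) ^ r = (N : ℝ) ^ (r + 1) := by
    rw [sum_congr rfl fun n hn ↦ by rw [max_eq_right (mem_Ioc.1 hn).2], sum_const, Nat.card_Ioc,
      Nat.sub_zero, nsmul_eq_mul, Real.rpow_add_one hN₀.ne', mul_comm]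
  have htail : ∑ n ∈ Ioc N M, ((max n N : ℕ) : ℝ) ^ r = ∑ n ∈ Ioc N M, (n : ℝ) ^ r :=
    sum_congr rfl fun n hn ↦ by rw [max_eq_left (mem_Ioc.1 hn).1.le]
  calc ∑ n ∈ Ioc 0 M, a n * ((max n N : ℕ) : ℝ) ^ r
      ≤ ∑ n ∈ Ioc 0 M, C * ((max n N : ℕ) : ℝ) ^ r :=
        sum_Ioc_mul_le_sum_Ioc_mul_of_antitone hanti (fun n ↦ by positivity)
          (fun n ↦ by simpa [mul_comm] using ha n) M
    _ = C * ((N : ℝ) ^ (r + 1) + ∑ n ∈ Ioc N M, (n : ℝ) ^ r) := by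
        rw [← mul_sum, ← sum_Ioc_consecutive _ N.zero_le hNM, hhead, htail]
    _ ≤ _ := by gcongr; exact sum_Ioc_rpow_le hN hNM hr hr'

end SummationByParts

section DirichletSeries

variable {a : ℕ → ℂ} {C : ℝ} {N : ℕ} {s : ℂ}

lemma norm_term_eq_mul_rpow_neg_re (a : ℕ → ℂ) (s : ℂ) {n : ℕ} (hn : n ≠ 0) :
    ‖LSeries.term a s n‖ = ‖a n‖ * (n : ℝ) ^ (-s.re) := by
  rw [LSeries.norm_term_eq, if_neg hn, Real.rpow_neg n.cast_nonneg, div_eq_mul_inv]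

lemma sum_range_succ_term (a : ℕ → ℂ) (s : ℂ) (N : ℕ) :
    ∑ n ∈ range (N + 1), LSeries.term a s n = ∑ n ∈ Ioc 0 N, LSeries.term a s n := by
  rw [Nat.range_succ_eq_Icc_zero, ← add_sum_Ioc_eq_sum_Icc N.zero_le, LSeries.term_zero, zero_add]

lemma nonneg_of_sum_Ioc_norm_le (ha : ∀ n : ℕ, ∑ k ∈ Ioc 0 n, ‖a k‖ ≤ C * n) : 0 ≤ C := by
  simpa using (sum_nonneg fun _ _ ↦ norm_nonneg _).trans (ha 1)

lemma one_sub_re_mul_norm_sum_term_le (ha : ∀ n : ℕ, ∑ k ∈ Ioc 0 n, ‖a k‖ ≤ C * n) (hN : N ≠ 0)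
    (hs₀ : 0 ≤ s.re) (hs₁ : s.re ≤ 1) :
    (1 - s.re) * ‖∑ n ∈ Ioc 0 N, LSeries.term a s n‖ ≤ C * (N : ℝ) ^ (1 - s.re) := by
  have hC : 0 ≤ C := nonneg_of_sum_Ioc_norm_le ha
  rcases hs₁.eq_or_lt with hs | hs
  · simpa [hs]
  have hsum : ‖∑ n ∈ Ioc 0 N, LSeries.term a s n‖ ≤
      C * (1 + ((N : ℝ) ^ (1 - s.re) - 1) / (1 - s.re)) := calc
    _ ≤ ∑ n ∈ Ioc 0 N, ‖LSeries.term a s n‖ := norm_sum_le _ _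
    _ = ∑ n ∈ Ioc 0 N, ‖a n‖ * ((max n 1 : ℕ) : ℝ) ^ (-s.re) := sum_congr rfl fun n hn ↦ by
        have hn₁ : 1 ≤ n := (mem_Ioc.1 hn).1
        rw [norm_term_eq_mul_rpow_neg_re a s (by lia), max_eq_left hn₁]
    _ ≤ _ := by
        simpa [neg_add_eq_sub] using sum_Ioc_mul_max_rpow_le hC ha one_ne_zero
          (Nat.one_le_iff_ne_zero.2 hN) (neg_nonpos.2 hs₀) (by linarith : -s.re ≠ -1)
  have hpos : 0 < 1 - s.re := sub_pos.2 hs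
  calc (1 - s.re) * ‖∑ n ∈ Ioc 0 N, LSeries.term a s n‖
      ≤ (1 - s.re) * (C * (1 + ((N : ℝ) ^ (1 - s.re) - 1) / (1 - s.re))) :=
        mul_le_mul_of_nonneg_left hsum hpos.le
    _ = C * ((N : ℝ) ^ (1 - s.re) - s.re) := by field_simp; ring
    _ ≤ C * (N : ℝ) ^ (1 - s.re) := by gcongr; linarith

lemma re_sub_one_mul_norm_sum_Ioc_term_le (ha : ∀ n : ℕ, ∑ k ∈ Ioc 0 n, ‖a k‖ ≤ C * n)
    (hN : N ≠ 0) (hs : 1 < s.re) {M : ℕ} (hNM : N ≤ M) :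
    (s.re - 1) * ‖∑ n ∈ Ioc N M, LSeries.term a s n‖ ≤ C * s.re * (N : ℝ) ^ (1 - s.re) := by
  have hC : 0 ≤ C := nonneg_of_sum_Ioc_norm_le ha
  have hpos : 0 < s.re - 1 := sub_pos.2 hs
  have hsum : ‖∑ n ∈ Ioc N M, LSeries.term a s n‖ ≤
      C * ((N : ℝ) ^ (1 - s.re) +
        ((M : ℝ) ^ (1 - s.re) - (N : ℝ) ^ (1 - s.re)) / (1 - s.re)) := calc
    _ ≤ ∑ n ∈ Ioc N M, ‖LSeries.term a s n‖ := norm_sum_le _ _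
    _ = ∑ n ∈ Ioc N M, ‖a n‖ * ((max n N : ℕ) : ℝ) ^ (-s.re) := sum_congr rfl fun n hn ↦ by
        have hn₁ : N < n := (mem_Ioc.1 hn).1
        rw [norm_term_eq_mul_rpow_neg_re a s (by lia), max_eq_left hn₁.le]
    _ ≤ ∑ n ∈ Ioc 0 M, ‖a n‖ * ((max n N : ℕ) : ℝ) ^ (-s.re) :=
        sum_le_sum_of_subset_of_nonneg (Ioc_subset_Ioc_left N.zero_le)
          fun _ _ _ ↦ by positivity
    _ ≤ _ := by
        simpa only [neg_add_eq_sub] using sum_Ioc_mul_max_rpow_le hC ha hN hNM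
          (by linarith : -s.re ≤ 0) (by linarith : -s.re ≠ -1)
  calc (s.re - 1) * ‖∑ n ∈ Ioc N M, LSeries.term a s n‖
      ≤ (s.re - 1) * (C * ((N : ℝ) ^ (1 - s.re) +
        ((M : ℝ) ^ (1 - s.re) - (N : ℝ) ^ (1 - s.re)) / (1 - s.re))) := by gcongr
    _ = C * (s.re * (N : ℝ) ^ (1 - s.re) - (M : ℝ) ^ (1 - s.re)) := by
        rw [← neg_sub s.re 1]; field_simp; ring
    _ ≤ C * (s.re * (N : ℝ) ^ (1 - s.re)) := by
        gcongr; exact sub_le_self _ (by positivity)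
    _ = C * s.re * (N : ℝ) ^ (1 - s.re) := by ring

lemma re_sub_one_mul_norm_LSeries_sub_sum_term_le
    (ha : ∀ n : ℕ, ∑ k ∈ Ioc 0 n, ‖a k‖ ≤ C * n) (hN : N ≠ 0) (hs : 1 < s.re) :
    (s.re - 1) * ‖LSeries a s - ∑ n ∈ Ioc 0 N, LSeries.term a s n‖ ≤
      C * s.re * (N : ℝ) ^ (1 - s.re) := by
  have hsummable : LSeriesSummable a s := by
    refine LSeriesSummable_of_sum_norm_bigO (r := 1) (.of_bound C (.of_forall fun n ↦ ?_))
      zero_le_one hs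
    rw [Real.norm_of_nonneg (by positivity), Real.rpow_one, Real.norm_natCast]
    exact ha n
  have hlim : Tendsto (fun M ↦ ∑ n ∈ Ioc 0 M, LSeries.term a s n) atTop (𝓝 (LSeries a s)) :=
    ((tendsto_add_atTop_iff_nat 1).2 hsummable.hasSum.tendsto_sum_nat).congr
      (sum_range_succ_term a s)
  refine le_of_tendsto ((hlim.sub_const _).norm.const_mul _) ?_
  filter_upwards [eventually_ge_atTop N] with M hNM
  rw [← sum_Ioc_consecutive _ N.zero_le hNM, add_sub_cancel_left]
  exact re_sub_one_mul_norm_sum_Ioc_term_le ha hN hs hNM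

end DirichletSeries

section Tauberian

lemma norm_one_add_div_sq_of_norm_eq {R : ℝ} (hR : 0 < R) {z : ℂ} (hz : ‖z‖ = R) :
    ‖1 + (z / R) ^ 2‖ = 2 / R * |z.re| := by
  have hR₀ : (R : ℂ) ≠ 0 := by exact_mod_cast hR.ne'
  have hsq : (R : ℂ) ^ 2 = z * (starRingEnd ℂ) z := by
    rw [Complex.mul_conj, Complex.normSq_eq_norm_sq, hz, Complex.ofReal_pow]
  have hfactor : 1 + (z / R) ^ 2 = z * ((2 * z.re : ℝ) : ℂ) / (R : ℂ) ^ 2 := by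
    rw [← Complex.add_conj, mul_add, ← hsq]; field_simp; ring
  rw [hfactor, norm_div, norm_mul, hz, norm_pow, Complex.norm_real, Complex.norm_real,
    Real.norm_eq_abs, Real.norm_of_nonneg hR.le, abs_mul, abs_two]
  field_simp

lemma norm_le_of_forall_mem_sphere_abs_re_mul_norm_le {G : ℂ → ℂ} {c : ℂ} {R K : ℝ} (hR : 0 < R)
    (hG : DiffContOnCl ℂ G (Metric.ball c R))
    (hK : ∀ s ∈ Metric.sphere c R, |(s - c).re| * ‖G s‖ ≤ K) : ‖G c‖ ≤ 2 / R * K := by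
  have hkernel : DiffContOnCl ℂ (fun s ↦ 1 + ((s - c) / R) ^ 2) (Metric.ball c R) :=
    Differentiable.diffContOnCl (by fun_prop)
  have hboundary : ∀ s ∈ frontier (Metric.ball c R),
      ‖(1 + ((s - c) / R) ^ 2) • G s‖ ≤ 2 / R * K := by
    intro s hs
    rw [frontier_ball c hR.ne'] at hs
    rw [norm_smul, norm_one_add_div_sq_of_norm_eq hR (mem_sphere_iff_norm.1 hs), mul_assoc]
    gcongr
    exact hK s hs
  simpa using Complex.norm_le_of_forall_mem_frontier_norm_le Metric.isBounded_ball
    (hkernel.smul hG) hboundary (subset_closure (Metric.mem_ball_self hR))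

variable {a : ℕ → ℂ} {C : ℝ}

lemma abs_re_sub_one_mul_rpow_mul_norm_sub_sum_term_le
    (ha : ∀ n : ℕ, ∑ k ∈ Ioc 0 n, ‖a k‖ ≤ C * n) {N : ℕ} (hN : N ≠ 0) {s w : ℂ}
    (hs : |s.re - 1| ≤ 1) (hw : 1 < s.re → w = LSeries a s) :
    |s.re - 1| * ((N : ℝ) ^ (s.re - 1) * ‖w - ∑ n ∈ Ioc 0 N, LSeries.term a s n‖) ≤
      ‖w‖ + 2 * C := by
  have hC : 0 ≤ C := nonneg_of_sum_Ioc_norm_le ha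
  obtain ⟨hs₀, hs₂⟩ := abs_le.1 hs
  set T := ∑ n ∈ Ioc 0 N, LSeries.term a s n with hT
  have hcancel : (N : ℝ) ^ (s.re - 1) * (N : ℝ) ^ (1 - s.re) = 1 := by
    rw [← Real.rpow_add (by positivity), sub_add_sub_cancel, sub_self, Real.rpow_zero]
  rcases lt_or_ge 1 s.re with hright | hleft
  · have htail := re_sub_one_mul_norm_LSeries_sub_sum_term_le ha hN hright
    rw [← hw hright, ← hT] at htail
    calc |s.re - 1| * ((N : ℝ) ^ (s.re - 1) * ‖w - T‖)
        = (N : ℝ) ^ (s.re - 1) * ((s.re - 1) * ‖w - T‖) := by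
          rw [abs_of_pos (sub_pos.2 hright)]; ring
      _ ≤ (N : ℝ) ^ (s.re - 1) * (C * s.re * (N : ℝ) ^ (1 - s.re)) := by gcongr
      _ = s.re * C := by rw [mul_left_comm, hcancel]; ring
      _ ≤ 2 * C := by gcongr; linarith
      _ ≤ ‖w‖ + 2 * C := le_add_of_nonneg_left (norm_nonneg w)
  · have hsum := one_sub_re_mul_norm_sum_term_le ha hN (by linarith) hleft
    have hpow : (N : ℝ) ^ (s.re - 1) ≤ 1 :=
      Real.rpow_le_one_of_one_le_of_nonpos (by exact_mod_cast Nat.one_le_iff_ne_zero.2 hN)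
        (sub_nonpos.2 hleft)
    have hnonneg : 0 ≤ 1 - s.re := sub_nonneg.2 hleft
    calc |s.re - 1| * ((N : ℝ) ^ (s.re - 1) * ‖w - T‖)
        ≤ (1 - s.re) * ((N : ℝ) ^ (s.re - 1) * (‖w‖ + ‖T‖)) := by
          rw [abs_sub_comm, abs_of_nonneg hnonneg]; gcongr; exact norm_sub_le w T
      _ = (1 - s.re) * (N : ℝ) ^ (s.re - 1) * ‖w‖ +
            (N : ℝ) ^ (s.re - 1) * ((1 - s.re) * ‖T‖) := by ring
      _ ≤ 1 * 1 * ‖w‖ + (N : ℝ) ^ (s.re - 1) * (C * (N : ℝ) ^ (1 - s.re)) := by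
          gcongr; linarith
      _ = ‖w‖ + C := by rw [mul_left_comm, hcancel]; ring
      _ ≤ ‖w‖ + 2 * C := by linarith

lemma norm_sub_sum_term_le_of_forall_mem_sphere (ha : ∀ n : ℕ, ∑ k ∈ Ioc 0 n, ‖a k‖ ≤ C * n)
    {F : ℂ → ℂ} {s₀ : ℂ} {R B : ℝ} (hs₀ : s₀.re = 1) (hR : 0 < R) (hR₁ : R ≤ 1)
    (hF : DiffContOnCl ℂ F (Metric.ball s₀ R)) (hB : ∀ s ∈ Metric.sphere s₀ R, ‖F s‖ ≤ B)
    (hFa : ∀ s ∈ Metric.sphere s₀ R, 1 < s.re → F s = LSeries a s) {N : ℕ} (hN : N ≠ 0) :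
    ‖F s₀ - ∑ n ∈ Ioc 0 N, LSeries.term a s₀ n‖ ≤ 2 / R * (B + 2 * C) := by
  have hsum : Differentiable ℂ fun s ↦ ∑ n ∈ Ioc 0 N, LSeries.term a s n :=
    .fun_sum fun n _ s ↦ (LSeries.hasDerivAt_term a n s).differentiableAt
  have hpow : Differentiable ℂ fun s : ℂ ↦ (N : ℂ) ^ (s - s₀) := fun s ↦
    (differentiableAt_id.sub_const s₀).const_cpow (.inl (Nat.cast_ne_zero.2 hN))
  have hbound := norm_le_of_forall_mem_sphere_abs_re_mul_norm_le
    (G := fun s ↦ (N : ℂ) ^ (s - s₀) • (F s - ∑ n ∈ Ioc 0 N, LSeries.term a s n)) (K := B + 2 * C)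
    hR (hpow.diffContOnCl.smul (hF.sub hsum.diffContOnCl)) fun s hs ↦ by
      have hre : (s - s₀).re = s.re - 1 := by rw [Complex.sub_re, hs₀]
      have hs₁ : |s.re - 1| ≤ 1 := by
        rw [← hre]
        exact (Complex.abs_re_le_norm _).trans ((mem_sphere_iff_norm.1 hs).trans_le hR₁)
      rw [norm_smul, Complex.norm_natCast_cpow_of_pos (Nat.pos_of_ne_zero hN), hre]
      grw [abs_re_sub_one_mul_rpow_mul_norm_sub_sum_term_le ha hN hs₁ (hFa s hs), hB s hs]
  simpa using hbound

theorem exists_norm_sum_term_le_of_analyticAt (ha : ∀ n : ℕ, ∑ k ∈ Ioc 0 n, ‖a k‖ ≤ C * n)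
    {F : ℂ → ℂ} {s₀ : ℂ} (hs₀ : s₀.re = 1) (hF : AnalyticAt ℂ F s₀)
    (hFa : ∀ᶠ s in 𝓝 s₀, 1 < s.re → F s = LSeries a s) :
    ∃ B, ∀ N, ‖∑ n ∈ range N, LSeries.term a s₀ n‖ ≤ B := by
  obtain ⟨ε, hε, hball⟩ := Metric.eventually_nhds_iff_ball.1 (hF.eventually_analyticAt.and hFa)
  obtain ⟨R, hR, hRlt⟩ := exists_between (lt_min hε one_pos)
  have hsub : Metric.closedBall s₀ R ⊆ Metric.ball s₀ ε :=
    Metric.closedBall_subset_ball (hRlt.trans_le (min_le_left ε 1))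
  have hFR : DifferentiableOn ℂ F (Metric.closedBall s₀ R) := fun s hs ↦
    (hball s (hsub hs)).1.differentiableAt.differentiableWithinAt
  obtain ⟨B, hB⟩ := (isCompact_closedBall s₀ R).exists_bound_of_continuousOn hFR.continuousOn
  have hbound (N : ℕ) (hN : N ≠ 0) :
      ‖F s₀ - ∑ n ∈ Ioc 0 N, LSeries.term a s₀ n‖ ≤ 2 / R * (B + 2 * C) :=
    norm_sub_sum_term_le_of_forall_mem_sphere ha hs₀ hR (hRlt.le.trans (min_le_right ε 1))
      (hFR.diffContOnCl_ball subset_rfl)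
      (fun s hs ↦ hB s (Metric.sphere_subset_closedBall hs))
      (fun s hs ↦ (hball s (hsub (Metric.sphere_subset_closedBall hs))).2) hN
  have hbound₀ : 0 ≤ 2 / R * (B + 2 * C) := (norm_nonneg _).trans (hbound 1 one_ne_zero)
  refine ⟨‖F s₀‖ + 2 / R * (B + 2 * C), fun N ↦ ?_⟩
  match N with
  | 0 | 1 => simpa using by positivity
  | M + 2 =>
    rw [sum_range_succ_term]
    grw [norm_le_norm_add_norm_sub (F s₀), hbound (M + 1) M.succ_ne_zero]

end Tauberian

section DirichletTest

theorem exists_tendsto_sum_inv_log_smul {E : Type*} [NormedAddCommGroup E] [NormedSpace ℝ E]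
    [CompleteSpace E] {b : ℕ → E} {B : ℝ} (hB : ∀ N, ‖∑ n ∈ range N, b n‖ ≤ B) :
    ∃ L, Tendsto (fun N ↦ ∑ n ∈ range N, (Real.log n)⁻¹ • b n) atTop (𝓝 L) := by
  have hanti : Antitone fun n : ℕ ↦ (Real.log (2 + n : ℕ))⁻¹ := fun m n hmn ↦
    inv_anti₀ (Real.log_pos (by norm_cast; lia)) (by gcongr)
  have hlim : Tendsto (fun n : ℕ ↦ (Real.log (2 + n : ℕ))⁻¹) atTop (𝓝 0) := by
    simp only [add_comm 2]
    exact tendsto_inv_atTop_zero.comp (Real.tendsto_log_atTop.comp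
      (tendsto_natCast_atTop_atTop.comp (tendsto_add_atTop_nat 2)))
  have hshift : ∀ N, ‖∑ n ∈ range N, b (2 + n)‖ ≤ B + B := fun N ↦ by
    rw [← add_sub_cancel_left (∑ n ∈ range 2, b n) (∑ n ∈ range N, b (2 + n)),
      ← sum_range_add]
    exact norm_sub_le_of_le (hB _) (hB _)
  obtain ⟨L, hL⟩ := cauchySeq_tendsto_of_complete
    (hanti.cauchySeq_series_mul_of_tendsto_zero_of_bounded hlim hshift)
  refine ⟨L, (tendsto_add_atTop_iff_nat 2).1 (hL.congr fun N ↦ ?_)⟩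
  rw [add_comm N, sum_range_add]
  simp [sum_range_succ]

end DirichletTest

section Primes

/-- The function `n ↦ log n` on primes, extended by zero: its summatory function is Chebyshev's `θ`,
and it is the coefficient sequence of `∑ log p * p ^ (-s)`. -/
noncomputable def logPrime (n : ℕ) : ℂ := if n.Prime then Real.log n else 0

lemma sum_norm_logPrime (n : ℕ) : ∑ k ∈ Ioc 0 n, ‖logPrime k‖ = Chebyshev.theta n := by
  rw [Chebyshev.theta, Nat.floor_natCast, sum_filter]
  refine sum_congr rfl fun k _ ↦ ?_
  rw [logPrime, apply_ite norm, norm_zero, Complex.norm_real,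
    Real.norm_of_nonneg (Real.log_natCast_nonneg k)]

lemma LSeriesSummable_vonMangoldt_sub_logPrime {s : ℂ} (hs : 1 / 2 < s.re) :
    LSeriesSummable ((fun n ↦ (ArithmeticFunction.vonMangoldt n : ℂ)) - logPrime) s := by
  have hnorm (k : ℕ) : ‖(ArithmeticFunction.vonMangoldt k : ℂ) - logPrime k‖ =
      if ¬ k.Prime then ArithmeticFunction.vonMangoldt k else 0 := by
    by_cases hk : k.Prime
    · simp [logPrime, hk, ArithmeticFunction.vonMangoldt_apply_prime]
    · simp [logPrime, hk, abs_of_nonneg]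
  have hsum (n : ℕ) : ∑ k ∈ Icc 1 n, ‖(ArithmeticFunction.vonMangoldt k : ℂ) - logPrime k‖ =
      Chebyshev.psi n - Chebyshev.theta n := by
    rw [Chebyshev.psi_sub_theta_eq_sum_not_prime, Nat.floor_natCast, sum_filter]
    exact sum_congr rfl fun k _ ↦ hnorm k
  refine LSeriesSummable_of_sum_norm_bigO ?_ one_half_pos.le hs
  simpa only [Pi.sub_apply, hsum, ← Real.sqrt_eq_rpow, Function.comp_def] using
    Chebyshev.isBigO_psi_sub_theta_sqrt.comp_tendsto tendsto_natCast_atTop_atTop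

lemma analyticAt_deriv_riemannZeta_div {s : ℂ} (hs : 1 ≤ s.re) (hs₁ : s ≠ 1) :
    AnalyticAt ℂ (fun z ↦ -deriv riemannZeta z / riemannZeta z) s := by
  have hζ : AnalyticAt ℂ riemannZeta s := analyticOn_riemannZeta s hs₁
  exact hζ.deriv.neg.div hζ (riemannZeta_ne_zero_of_one_le_re hs)

theorem exists_analyticAt_eq_LSeries_logPrime {s : ℂ} (hs : 1 ≤ s.re) (hs₁ : s ≠ 1) :
    ∃ F : ℂ → ℂ, AnalyticAt ℂ F s ∧ ∀ z, 1 < z.re → F z = LSeries logPrime z := by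
  set Λ : ℕ → ℂ := fun n ↦ (ArithmeticFunction.vonMangoldt n : ℂ)
  refine ⟨fun z ↦ -deriv riemannZeta z / riemannZeta z - LSeries (Λ - logPrime) z,
    (analyticAt_deriv_riemannZeta_div hs hs₁).sub (LSeries_analyticOnNhd _ s ?_), fun z hz ↦ ?_⟩
  · refine (LSeries.abscissaOfAbsConv_le_of_forall_lt_LSeriesSummable (x := 1 / 2) fun y hy ↦
      LSeriesSummable_vonMangoldt_sub_logPrime (by simpa using hy)).trans_lt ?_
    exact_mod_cast one_half_lt_one.trans_le hs
  · have hΛ := ArithmeticFunction.LSeriesSummable_vonMangoldt hz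
    have hdiff : LSeriesSummable (Λ - logPrime) z :=
      LSeriesSummable_vonMangoldt_sub_logPrime (one_half_lt_one.trans hz)
    simp only [← ArithmeticFunction.LSeries_vonMangoldt_eq_deriv_riemannZeta_div hz]
    rw [← LSeries_sub hΛ hdiff, sub_sub_cancel]

lemma inv_log_smul_term_logPrime (s : ℂ) (n : ℕ) :
    (Real.log n)⁻¹ • LSeries.term logPrime s n = if n.Prime then (n : ℂ) ^ (-s) else 0 := by
  split_ifs with hn
  · have hlog : Real.log n ≠ 0 := (Real.log_pos (by exact_mod_cast hn.one_lt)).ne'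
    rw [LSeries.term_of_ne_zero hn.ne_zero, logPrime, if_pos hn, Complex.cpow_neg,
      Complex.real_smul, Complex.ofReal_inv, mul_div_assoc',
      inv_mul_cancel₀ (Complex.ofReal_ne_zero.2 hlog), one_div]
  · simp [LSeries.term_def, logPrime, hn]

theorem exists_tendsto_sum_prime_cpow_neg {s : ℂ} (hs : s.re = 1) (hs₁ : s ≠ 1) :
    ∃ L, Tendsto (fun N ↦ ∑ p ∈ range N with p.Prime, (p : ℂ) ^ (-s)) atTop (𝓝 L) := by
  have hchebyshev (n : ℕ) : ∑ k ∈ Ioc 0 n, ‖logPrime k‖ ≤ Real.log 4 * n :=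
    (sum_norm_logPrime n).trans_le (Chebyshev.theta_le_log4_mul_x n.cast_nonneg)
  obtain ⟨F, hF, hFeq⟩ := exists_analyticAt_eq_LSeries_logPrime hs.ge hs₁
  obtain ⟨B, hB⟩ := exists_norm_sum_term_le_of_analyticAt hchebyshev hs hF (.of_forall hFeq)
  simpa only [inv_log_smul_term_logPrime, ← sum_filter] using exists_tendsto_sum_inv_log_smul hB

end Primes

theorem stmt9 (Δ : ℝ) (hΔ : Δ ≠ 0) :
    ∃ L : ℂ,
      Tendsto (fun t : ℝ => ∑ p ∈ primesUpTo t, (p : ℂ) ^ (-(1 + Complex.I * (Δ : ℂ))))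
        atTop (nhds L) := by
  obtain ⟨L, hL⟩ :=
    exists_tendsto_sum_prime_cpow_neg (s := 1 + Complex.I * Δ) (by simp) (by simpa using hΔ)
  exact ⟨L, hL.comp ((tendsto_add_atTop_nat 1).comp tendsto_nat_floor_atTop)⟩
end
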